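/- arXiv:1111.5159 — 2 statements merged into one kernel-verified Lean document; each statement's English description precedes it below -/
import Mathlib

section
/- There exists an absolute constant K such that for every continuous strictly convex function f : ℝ → ℝ and all finite sets A, C ⊂ ℝ with |A|/2 ≤ |C| ≤ 2|A| and |A| ≥ 2, one has |f(A)+C|^{10} · |A+A|^9 ≥ K · |A|^{24} / (log|A|)^2. -/
open Finset Pointwise

noncomputable def dlt (X Y : Finset ℝ) (s : ℝ) : ℕ :=
  ((X ×ˢ Y).filter (fun p => p.1 - p.2 = s)).card

noncomputable def sg (X Y : Finset ℝ) (s : ℝ) : ℕ :=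
  ((X ×ˢ Y).filter (fun p => p.1 + p.2 = s)).card

noncomputable def En (X Y : Finset ℝ) : ℝ :=
  ∑ s ∈ X - X, (dlt X X s : ℝ) * (dlt Y Y s : ℝ)

noncomputable def E3 (X : Finset ℝ) : ℝ :=
  ∑ s ∈ X - X, (dlt X X s : ℝ) ^ 3

noncomputable def E15 (X : Finset ℝ) : ℝ :=
  ∑ s ∈ X - X, (dlt X X s : ℝ) ^ ((3 : ℝ) / 2)

/-!
If `s = a + b` with `a ∈ A` and `b ∈ B`, then for every `c ∈ C` the curve `y = f (s - x) + c` passes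
through the point `(b, f a + c)` of the grid `B × (f(A) + C)`. By strict convexity two of these
curves meet at most once, and each consists of two monotone pieces. A monotone curve through a
`t × t` array of cells visits fewer than `2t` of them, so counting pairs of points in a common cell
gives a Szemerédi–Trotter bound: at most `κ |A| |B|² / τ³` elements `s` have `τ` representations in
`A + B`, where `κ ≪ |f(A) + C|² / (|A| |C|)`.

Let `r(s)` be the number of representations of `s` in `A - A`. The Katz–Koester inclusion
`A + (A ∩ (s + A)) ⊆ (A + A) ∩ (s + (A + A))` and Cauchy–Schwarz give, following Schoen and
Shkredov, `|A|² (∑ r^(3/2))² ≤ E(A, A + A) ∑ r³`. Summing the Szemerédi–Trotter bound over `τ`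
controls both factors on the right from above, and `∑ r^(3/2)` from below in terms of the energy
`∑ r² ≥ |A|⁴ / |A + A|`. The outcome is `|A|¹⁴ ≪ κ⁵ |A + A|⁹ (log |A|)²`.
-/

section Incidence

variable {X Y ι : Type*} [LinearOrder X] [LinearOrder Y]

lemma card_le_card_offDiag_filter_add_card_image {α β : Type*} [DecidableEq β]
    (P : Finset α) (k : α → β) :
    #P ≤ #{z ∈ P.offDiag | k z.1 = k z.2} + #(P.image k) := by
  classical
  set D := {z ∈ P.offDiag | k z.1 = k z.2}.image Prod.fst with hD
  have hinj : Set.InjOn k (P \ D : Finset α) := by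
    intro x hx y hy hxy
    by_contra hne
    simp only [hD, coe_sdiff, coe_image, Set.mem_sdiff, mem_coe, Set.mem_image, mem_filter,
      mem_offDiag, Prod.exists, not_exists] at hx hy
    exact hx.2 x y ⟨⟨⟨hx.1, hy.1, hne⟩, hxy⟩, rfl⟩
  calc #P ≤ #D + #(P \ D) := by rw [add_comm]; exact card_le_card_sdiff_add_card
    _ ≤ _ := by
      gcongr
      · exact card_image_le
      · rw [← card_image_of_injOn hinj]
        exact card_le_card (image_subset_image sdiff_subset)

lemma exists_monotone_card_fiber_mul_le (B : Finset X) {t : ℕ} (ht : 0 < t) :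
    ∃ β : X → ℕ, Monotone β ∧ (∀ b ∈ B, β b < t) ∧ ∀ i, #{b ∈ B | β b = i} * t ≤ #B + t := by
  set w := #B / t + 1
  have w_pos : 0 < w := Nat.succ_pos _
  let rank : X → ℕ := fun x => #{y ∈ B | y < x}
  have rank_mono : Monotone rank := fun x y hxy =>
    card_le_card (monotone_filter_right _ fun z _ hz => hz.trans_le hxy)
  have rank_strictMonoOn : StrictMonoOn rank B := fun x hx y _ hxy =>
    card_lt_card <| (ssubset_iff_of_subset
      (monotone_filter_right _ fun z _ hz => hz.trans hxy)).2
        ⟨x, mem_filter.2 ⟨hx, hxy⟩, by simp⟩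
  have rank_lt : ∀ b ∈ B, rank b < #B := fun b hb =>
    card_lt_card <| filter_ssubset.2 ⟨b, hb, lt_irrefl b⟩
  refine ⟨fun x => rank x / w, fun x y h => Nat.div_le_div_right (rank_mono h), fun b hb => ?_,
    fun i => ?_⟩
  · exact (Nat.div_lt_iff_lt_mul w_pos).2
      ((rank_lt b hb).trans (Nat.lt_mul_div_succ _ ht))
  · have hfiber : #{b ∈ B | rank b / w = i} ≤ #(Ico (i * w) ((i + 1) * w)) := by
      refine card_le_card_of_injOn rank (fun b hb => ?_)
        (rank_strictMonoOn.injOn.mono (filter_subset _ _))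
      rw [mem_coe, mem_filter, Nat.div_eq_iff w_pos] at hb
      simp only [coe_Ico, Set.mem_Ico, add_mul]
      omega
    calc #{b ∈ B | rank b / w = i} * t ≤ w * t := by
          gcongr
          simpa [add_mul] using hfiber
      _ = #B / t * t + t := by ring
      _ ≤ #B + t := by gcongr; exact Nat.div_mul_le_self _ _

lemma card_filter_product_self_eq_mul_le {α : Type*} {B : Finset α} {β : α → ℕ} {t m : ℕ}
    (h : ∀ i, #{b ∈ B | β b = i} * t ≤ m) :
    #{p ∈ B ×ˢ B | β p.1 = β p.2} * t ≤ #B * m := by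
  rw [card_filter, sum_product, sum_mul]
  refine (sum_le_card_nsmul _ _ m fun b _ => ?_).trans_eq (smul_eq_mul _ _)
  rw [← card_filter]
  simpa only [eq_comm] using h (β b)

-- An increasing path in a `t × t` array of cells visits fewer than `2 * t` of them, because the sum
-- of the two cell indices determines the cell along the path; for a decreasing path reflect `η`.
lemma card_le_card_same_cell_add {Γ : Finset (X × Y)} {β : X → ℕ} {η : Y → ℕ} {t : ℕ}
    (hβ : Monotone β) (hη : Monotone η) (hβt : ∀ p ∈ Γ, β p.1 < t) (hηt : ∀ p ∈ Γ, η p.2 < t)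
    (hΓ : MonovaryOn Prod.snd Prod.fst (Γ : Set (X × Y)) ∨
      AntivaryOn Prod.snd Prod.fst (Γ : Set (X × Y))) :
    #Γ ≤ #{z ∈ Γ.offDiag | β z.1.1 = β z.2.1 ∧ η z.1.2 = η z.2.2} + 2 * t := by
  suffices ∃ k : X × Y → ℕ, (∀ p ∈ Γ, k p < 2 * t) ∧
      ∀ p ∈ Γ, ∀ p' ∈ Γ, k p = k p' → β p.1 = β p'.1 ∧ η p.2 = η p'.2 by
    obtain ⟨k, hkt, hk⟩ := this
    refine (card_le_card_offDiag_filter_add_card_image Γ k).trans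
      (add_le_add (card_le_card fun z hz => ?_) ?_)
    · rw [mem_filter, mem_offDiag] at hz ⊢
      exact ⟨hz.1, hk _ hz.1.1 _ hz.1.2.1 hz.2⟩
    · rw [← card_range (2 * t)]
      exact card_le_card (image_subset_iff.2 fun p hp => mem_range.2 (hkt p hp))
  rcases hΓ with hΓ | hΓ
  · refine ⟨fun p => β p.1 + η p.2, fun p hp => ?_, fun p hp p' hp' hk => ?_⟩
    · have := hβt p hp; have := hηt p hp; dsimp only; omega
    dsimp only at hk
    rcases lt_trichotomy p.1 p'.1 with h | h | h
    · have := hβ h.le; have := hη (hΓ hp hp' h); omega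
    · rw [h] at hk ⊢; omega
    · have := hβ h.le; have := hη (hΓ hp' hp h); omega
  · refine ⟨fun p => β p.1 + (t - η p.2), fun p hp => ?_, fun p hp p' hp' hk => ?_⟩
    · have := hβt p hp; have := hηt p hp; dsimp only; omega
    have := hηt p hp
    have := hηt p' hp'
    dsimp only at hk
    rcases lt_trichotomy p.1 p'.1 with h | h | h
    · have := hβ h.le; have := hη (hΓ hp hp' h); omega
    · rw [h] at hk ⊢; omega
    · have := hβ h.le; have := hη (hΓ hp' hp h); omega

variable {Q : Finset ι} {Γ : ι → Finset (X × Y)} {B : Finset X} {W : Finset Y} {τ : ℕ}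

lemma card_mul_sub_mul_sq_le_of_curves {t : ℕ} (ht : 0 < t) (hsub : ∀ q ∈ Q, Γ q ⊆ B ×ˢ W)
    (hmono : ∀ q ∈ Q, MonovaryOn Prod.snd Prod.fst (Γ q : Set (X × Y)) ∨
      AntivaryOn Prod.snd Prod.fst (Γ q : Set (X × Y)))
    (hinter : (Q : Set ι).Pairwise fun q q' => (Γ q ∩ Γ q' : Set (X × Y)).Subsingleton)
    (hcard : ∀ q ∈ Q, τ ≤ #(Γ q)) :
    #Q * (τ - 2 * t) * t ^ 2 ≤ #B * (#B + t) * (#W * (#W + t)) := by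
  obtain ⟨β, hβ, hβt, hβfib⟩ := exists_monotone_card_fiber_mul_le B ht
  obtain ⟨η, hη, hηt, hηfib⟩ := exists_monotone_card_fiber_mul_le W ht
  let pairs (q : ι) : Finset ((X × Y) × (X × Y)) :=
    {z ∈ (Γ q).offDiag | β z.1.1 = β z.2.1 ∧ η z.1.2 = η z.2.2}
  have hlower : ∀ q ∈ Q, τ - 2 * t ≤ #(pairs q) := fun q hq => by
    have := card_le_card_same_cell_add hβ hη
      (fun p hp => hβt _ (mem_product.1 (hsub q hq hp)).1)
      (fun p hp => hηt _ (mem_product.1 (hsub q hq hp)).2) (hmono q hq)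
    exact Nat.sub_le_of_le_add ((hcard q hq).trans this)
  have hdisj : (Q : Set ι).PairwiseDisjoint pairs := fun q hq q' hq' hne =>
    disjoint_left.2 fun z hz hz' => by
      rw [mem_filter, mem_offDiag] at hz hz'
      exact hz.1.2.2 (hinter hq hq' hne ⟨hz.1.1, hz'.1.1⟩ ⟨hz.1.2.1, hz'.1.2.1⟩)
  have hupper : #(Q.biUnion pairs) ≤
      #({p ∈ B ×ˢ B | β p.1 = β p.2} ×ˢ {p ∈ W ×ˢ W | η p.1 = η p.2}) := by
    refine card_le_card_of_injOn (Equiv.prodProdProdComm X Y X Y) (fun z hz => ?_)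
      (Equiv.injective _).injOn
    obtain ⟨q, hq, hz⟩ := mem_biUnion.1 (mem_coe.1 hz)
    rw [mem_filter, mem_offDiag] at hz
    have h₁ := mem_product.1 (hsub q hq hz.1.1)
    have h₂ := mem_product.1 (hsub q hq hz.1.2.1)
    simp only [Equiv.prodProdProdComm_apply, mem_coe, mem_product, mem_filter]
    exact ⟨⟨⟨h₁.1, h₂.1⟩, hz.2.1⟩, ⟨h₁.2, h₂.2⟩, hz.2.2⟩
  calc #Q * (τ - 2 * t) * t ^ 2 ≤ (∑ q ∈ Q, #(pairs q)) * t ^ 2 := by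
        gcongr
        simpa only [smul_eq_mul] using card_nsmul_le_sum Q _ _ hlower
    _ ≤ #{p ∈ B ×ˢ B | β p.1 = β p.2} * #{p ∈ W ×ˢ W | η p.1 = η p.2} * t ^ 2 := by
        rw [← card_biUnion hdisj, ← card_product]
        gcongr
    _ = (#{p ∈ B ×ˢ B | β p.1 = β p.2} * t) * (#{p ∈ W ×ˢ W | η p.1 = η p.2} * t) := by ring
    _ ≤ _ := Nat.mul_le_mul (card_filter_product_self_eq_mul_le hβfib)
        (card_filter_product_self_eq_mul_le hηfib)

lemma card_mul_pow_three_le_of_curves (hτ : 4 ≤ τ) (hτB : τ ≤ #B) (hτW : τ ≤ #W)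
    (hsub : ∀ q ∈ Q, Γ q ⊆ B ×ˢ W)
    (hmono : ∀ q ∈ Q, MonovaryOn Prod.snd Prod.fst (Γ q : Set (X × Y)) ∨
      AntivaryOn Prod.snd Prod.fst (Γ q : Set (X × Y)))
    (hinter : (Q : Set ι).Pairwise fun q q' => (Γ q ∩ Γ q' : Set (X × Y)).Subsingleton)
    (hcard : ∀ q ∈ Q, τ ≤ #(Γ q)) :
    #Q * τ ^ 3 ≤ 512 * #B ^ 2 * #W ^ 2 := by
  obtain ⟨t, ht⟩ : ∃ t, t = τ / 4 := ⟨_, rfl⟩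
  have hτt : τ ≤ 8 * t := by omega
  have hτsub : τ ≤ 2 * (τ - 2 * t) := by omega
  calc #Q * τ ^ 3 = #Q * (τ * τ ^ 2) := by ring
    _ ≤ #Q * ((2 * (τ - 2 * t)) * (8 * t) ^ 2) := by gcongr
    _ = 128 * (#Q * (τ - 2 * t) * t ^ 2) := by ring
    _ ≤ 128 * (#B * (#B + t) * (#W * (#W + t))) := by
      gcongr 128 * ?_
      exact card_mul_sub_mul_sq_le_of_curves (by omega) hsub hmono hinter hcard
    _ ≤ 128 * (#B * (#B + #B) * (#W * (#W + #W))) := by gcongr <;> omega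
    _ = _ := by ring

end Incidence

section WeakMoments

variable {ι : Type*} {D : Finset ι} {g : ι → ℕ} {L : ℝ} {p : ℕ}

/-- `L` bounds the `p`-th power of the weak `ℓᵖ` quasinorm of the nonnegative-integer-valued
function `g` on `D`. -/
def WeakLpBound (D : Finset ι) (g : ι → ℕ) (p : ℕ) (L : ℝ) : Prop :=
  ∀ τ : ℕ, 0 < τ → (#{s ∈ D | τ ≤ g s} : ℝ) * (τ : ℝ) ^ p ≤ L

lemma WeakLpBound.nonneg (h : WeakLpBound D g p L) : 0 ≤ L :=
  le_trans (by positivity) (h 1 one_pos)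

lemma add_one_pow_succ_le {x : ℝ} (hx : 0 ≤ x) (p : ℕ) :
    (x + 1) ^ (p + 1) ≤ x ^ (p + 1) + (p + 1) * (x + 1) ^ p := by
  induction p with
  | zero => simp
  | succ p ih =>
    have hmono : x ^ (p + 1) ≤ (x + 1) ^ (p + 1) := by gcongr; linarith
    calc (x + 1) ^ (p + 1 + 1) = (x + 1) ^ (p + 1) * (x + 1) := pow_succ _ _
      _ ≤ (x ^ (p + 1) + (p + 1) * (x + 1) ^ p) * (x + 1) := by gcongr
      _ = x ^ (p + 1 + 1) + (p + 1) * (x + 1) ^ (p + 1) + x ^ (p + 1) := by ring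
      _ ≤ x ^ (p + 1 + 1) + (p + 1) * (x + 1) ^ (p + 1) + (x + 1) ^ (p + 1) := by gcongr
      _ = x ^ (p + 1 + 1) + ((p + 1 : ℕ) + 1) * (x + 1) ^ (p + 1) := by push_cast; ring

lemma pow_succ_le_pow_succ_add_sum_Ioc (p : ℕ) {T n : ℕ} (h : T ≤ n) :
    (n : ℝ) ^ (p + 1) ≤ (T : ℝ) ^ (p + 1) + ∑ τ ∈ Ioc T n, (p + 1) * (τ : ℝ) ^ p := by
  induction n, h using Nat.le_induction with
  | base => simp
  | succ k hk ih =>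
    rw [sum_Ioc_succ_top hk, Nat.cast_succ]
    linarith [add_one_pow_succ_le (Nat.cast_nonneg (α := ℝ) k) p]

lemma sum_pow_succ_filter_le (p : ℕ) (T : ℕ) {N : ℕ} (hN : ∀ s ∈ D, g s ≤ N) :
    ∑ s ∈ D with T ≤ g s, (g s : ℝ) ^ (p + 1) ≤
      (#{s ∈ D | T ≤ g s} : ℝ) * (T : ℝ) ^ (p + 1) +
        ∑ τ ∈ Ioc T N, (#{s ∈ D | τ ≤ g s} : ℝ) * ((p + 1) * (τ : ℝ) ^ p) := by
  have hlayer : ∀ s ∈ D, T ≤ g s → (g s : ℝ) ^ (p + 1) ≤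
      (T : ℝ) ^ (p + 1) + ∑ τ ∈ Ioc T N, if τ ≤ g s then (p + 1) * (τ : ℝ) ^ p else 0 := by
    intro s hs hTs
    refine (pow_succ_le_pow_succ_add_sum_Ioc p hTs).trans_eq ?_
    rw [← sum_filter]
    congr 2
    ext τ
    have := hN s hs
    simp only [mem_Ioc, mem_filter]
    omega
  calc ∑ s ∈ D with T ≤ g s, (g s : ℝ) ^ (p + 1)
      ≤ ∑ s ∈ D with T ≤ g s, ((T : ℝ) ^ (p + 1) +
          ∑ τ ∈ Ioc T N, if τ ≤ g s then (p + 1) * (τ : ℝ) ^ p else 0) :=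
        sum_le_sum fun s hs => hlayer s (mem_filter.1 hs).1 (mem_filter.1 hs).2
    _ = (#{s ∈ D | T ≤ g s} : ℝ) * (T : ℝ) ^ (p + 1) + ∑ τ ∈ Ioc T N,
          (#{s ∈ {s ∈ D | T ≤ g s} | τ ≤ g s} : ℝ) * ((p + 1) * (τ : ℝ) ^ p) := by
        rw [sum_add_distrib, sum_const, nsmul_eq_mul, sum_comm]
        simp only [← sum_filter, sum_const, nsmul_eq_mul]
    _ ≤ _ := by
        gcongr
        exact filter_subset _ _

lemma WeakLpBound.sum_pow_succ_le_mul_log (h : WeakLpBound D g (p + 1) L) {N : ℕ}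
    (hN : ∀ s ∈ D, g s ≤ N) :
    ∑ s ∈ D, (g s : ℝ) ^ (p + 1) ≤ (p + 1) * L * (1 + Real.log N) := by
  have hlevel : ∀ τ ∈ Ioc 0 N, (#{s ∈ D | τ ≤ g s} : ℝ) * ((p + 1) * (τ : ℝ) ^ p) ≤
      (p + 1) * L * (τ : ℝ)⁻¹ := by
    intro τ hτ
    have hτ₀ : 0 < τ := (mem_Ioc.1 hτ).1
    rw [← div_eq_mul_inv, le_div_iff₀ (by positivity)]
    calc _ = (p + 1) * ((#{s ∈ D | τ ≤ g s} : ℝ) * (τ : ℝ) ^ (p + 1)) := by ring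
      _ ≤ _ := by gcongr; exact h τ hτ₀
  have hharmonic : ∑ τ ∈ Ioc 0 N, (τ : ℝ)⁻¹ ≤ 1 + Real.log N := by
    simpa [harmonic_eq_sum_Icc, ← Icc_add_one_left_eq_Ioc] using harmonic_le_one_add_log N
  calc ∑ s ∈ D, (g s : ℝ) ^ (p + 1)
      ≤ ∑ τ ∈ Ioc 0 N, (#{s ∈ D | τ ≤ g s} : ℝ) * ((p + 1) * (τ : ℝ) ^ p) := by
        simpa using sum_pow_succ_filter_le p 0 hN
    _ ≤ ∑ τ ∈ Ioc 0 N, (p + 1) * L * (τ : ℝ)⁻¹ := sum_le_sum hlevel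
    _ = (p + 1) * L * ∑ τ ∈ Ioc 0 N, (τ : ℝ)⁻¹ := (mul_sum ..).symm
    _ ≤ _ := by gcongr; have := h.nonneg; positivity

lemma WeakLpBound.sum_pow_succ_filter_le_div (h : WeakLpBound D g (p + 2) L) {T : ℕ} (hT : 0 < T) :
    ∑ s ∈ D with T ≤ g s, (g s : ℝ) ^ (p + 1) ≤ (p + 2) * L / T := by
  set N := max T (D.sup g)
  have hlevel : ∀ τ ∈ Ioc T N, (#{s ∈ D | τ ≤ g s} : ℝ) * ((p + 1) * (τ : ℝ) ^ p) ≤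
      (p + 1) * L * ((τ : ℝ) ^ 2)⁻¹ := by
    intro τ hτ
    have hτ₀ : 0 < τ := hT.trans (mem_Ioc.1 hτ).1
    rw [← div_eq_mul_inv, le_div_iff₀ (by positivity)]
    calc _ = (p + 1) * ((#{s ∈ D | τ ≤ g s} : ℝ) * (τ : ℝ) ^ (p + 2)) := by ring
      _ ≤ _ := by gcongr; exact h τ hτ₀
  have hinv_sq : ∑ τ ∈ Ioc T N, ((τ : ℝ) ^ 2)⁻¹ ≤ (T : ℝ)⁻¹ :=
    (sum_Ioc_inv_sq_le_sub hT.ne' (le_max_left _ _)).trans (by simp)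
  have hT' : (#{s ∈ D | T ≤ g s} : ℝ) * (T : ℝ) ^ (p + 1) ≤ L / T := by
    rw [le_div_iff₀ (by positivity), mul_assoc, ← pow_succ]
    exact h T hT
  have hL := h.nonneg
  calc ∑ s ∈ D with T ≤ g s, (g s : ℝ) ^ (p + 1)
      ≤ (#{s ∈ D | T ≤ g s} : ℝ) * (T : ℝ) ^ (p + 1) +
          ∑ τ ∈ Ioc T N, (#{s ∈ D | τ ≤ g s} : ℝ) * ((p + 1) * (τ : ℝ) ^ p) :=
        sum_pow_succ_filter_le p T fun s hs => (le_sup hs).trans (le_max_right _ _)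
    _ ≤ L / T + (p + 1) * L * ∑ τ ∈ Ioc T N, ((τ : ℝ) ^ 2)⁻¹ := by
        rw [mul_sum]
        exact add_le_add hT' (sum_le_sum hlevel)
    _ ≤ L / T + (p + 1) * L * (T : ℝ)⁻¹ := by gcongr
    _ = (p + 2) * L / T := by ring

-- Values of `g` above `Δ = 2 * (p + 2) * L / ∑ g ^ (p + 1)` carry at most half of `∑ g ^ (p + 1)`.
lemma WeakLpBound.sum_pow_succ_le_rpow_mul_sum_rpow (h : WeakLpBound D g (p + 2) L) {q : ℝ}
    (hq₀ : 0 ≤ q) (hq : q ≤ p + 1) :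
    ∑ s ∈ D, (g s : ℝ) ^ (p + 1) ≤
      2 * (2 * (p + 2) * L / ∑ s ∈ D, (g s : ℝ) ^ (p + 1)) ^ (p + 1 - q) *
        ∑ s ∈ D, (g s : ℝ) ^ q := by
  have hL := h.nonneg
  set S := ∑ s ∈ D, (g s : ℝ) ^ (p + 1)
  set Δ := 2 * (p + 2) * L / S
  have hS : 0 ≤ S := by positivity
  have hΔ : 0 ≤ Δ := by positivity
  obtain hS | hS := hS.eq_or_lt
  · rw [← hS]; positivity
  have hlarge : ∑ s ∈ D with ⌊Δ⌋₊ + 1 ≤ g s, (g s : ℝ) ^ (p + 1) ≤ S / 2 := by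
    refine (h.sum_pow_succ_filter_le_div (Nat.succ_pos _)).trans ?_
    have hΔlt : Δ < (⌊Δ⌋₊ + 1 : ℕ) := mod_cast Nat.lt_floor_add_one Δ
    rw [div_lt_iff₀ hS] at hΔlt
    rw [div_le_iff₀ (by positivity)]
    linarith
  have hsmall : ∑ s ∈ D with ¬⌊Δ⌋₊ + 1 ≤ g s, (g s : ℝ) ^ (p + 1) ≤
      Δ ^ (p + 1 - q) * ∑ s ∈ D, (g s : ℝ) ^ q := by
    rw [mul_sum]
    refine (sum_le_sum fun s hs => ?_).trans
      (sum_le_sum_of_subset_of_nonneg (filter_subset _ D) fun _ _ _ => by positivity)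
    have hgs : (g s : ℝ) ≤ Δ :=
      (Nat.le_floor_iff hΔ).1 (Nat.lt_succ_iff.1 (not_le.1 (mem_filter.1 hs).2))
    have hpq : 0 ≤ (p : ℝ) + 1 - q := by linarith
    calc (g s : ℝ) ^ (p + 1) = (g s : ℝ) ^ ((p + 1 - q) + q : ℝ) := by
          rw [sub_add_cancel, ← Real.rpow_natCast, Nat.cast_succ]
      _ = (g s : ℝ) ^ (p + 1 - q) * (g s : ℝ) ^ q :=
          Real.rpow_add_of_nonneg (Nat.cast_nonneg _) hpq hq₀
      _ ≤ _ := by gcongr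
  have hsplit := sum_filter_add_sum_filter_not D (fun s => ⌊Δ⌋₊ + 1 ≤ g s)
    fun s => (g s : ℝ) ^ (p + 1)
  linarith

lemma WeakLpBound.sq_sum_sq_le (h : WeakLpBound D g 3 L) :
    (∑ s ∈ D, (g s : ℝ) ^ 2) ^ 2 ≤ 12 * L * ∑ s ∈ D, (g s : ℝ) := by
  have hL := h.nonneg
  set S := ∑ s ∈ D, (g s : ℝ) ^ 2 with hSdef
  obtain hS | hS : 0 = S ∨ 0 < S := (by positivity : 0 ≤ S).eq_or_lt
  · rw [← hS, zero_pow two_ne_zero]; positivity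
  have key : S ≤ 2 * (6 * L / S) * ∑ s ∈ D, (g s : ℝ) := by
    convert h.sum_pow_succ_le_rpow_mul_sum_rpow (p := 1) zero_le_one (by norm_num) using 2
    all_goals norm_num [hSdef]
  calc S ^ 2 = S * S := sq S
    _ ≤ 2 * (6 * L / S) * (∑ s ∈ D, (g s : ℝ)) * S := by gcongr
    _ = 12 * L * ∑ s ∈ D, (g s : ℝ) := by field_simp; ring

lemma WeakLpBound.sum_sq_pow_three_le (h : WeakLpBound D g 3 L) :
    (∑ s ∈ D, (g s : ℝ) ^ 2) ^ 3 ≤ 24 * L * (∑ s ∈ D, (g s : ℝ) ^ (3 / 2 : ℝ)) ^ 2 := by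
  have hL := h.nonneg
  set S := ∑ s ∈ D, (g s : ℝ) ^ 2 with hSdef
  set F := ∑ s ∈ D, (g s : ℝ) ^ (3 / 2 : ℝ)
  obtain hS | hS : 0 = S ∨ 0 < S := (by positivity : 0 ≤ S).eq_or_lt
  · rw [← hS, zero_pow three_ne_zero]; positivity
  have key : S ≤ 2 * √(6 * L / S) * F := by
    rw [Real.sqrt_eq_rpow]
    convert h.sum_pow_succ_le_rpow_mul_sum_rpow (p := 1) (q := 3 / 2) (by norm_num) (by norm_num)
      using 2
    all_goals norm_num [hSdef]
  calc S ^ 3 = S ^ 2 * S := pow_succ S 2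
    _ ≤ (2 * √(6 * L / S) * F) ^ 2 * S := by gcongr
    _ = 4 * √(6 * L / S) ^ 2 * F ^ 2 * S := by ring
    _ = 24 * L * F ^ 2 := by rw [Real.sq_sqrt (by positivity)]; field_simp; ring

end WeakMoments

section Energy

variable {G : Type*} [AddCommGroup G] [DecidableEq G]

lemma sum_addConvolution (A B : Finset G) : ∑ x ∈ A + B, A.addConvolution B x = #A * #B := by
  rw [← card_product]
  exact (card_eq_sum_card_fiberwise fun p hp =>
    add_mem_add (mem_product.1 hp).1 (mem_product.1 hp).2).symm

lemma addConvolution_eq_card_filter_sub_mem (A B : Finset G) (x : G) :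
    A.addConvolution B x = #{b ∈ B | x - b ∈ A} :=
  card_nbij' Prod.snd (fun b => (x - b, b))
    (fun p hp => by
      obtain ⟨⟨ha, hb⟩, rfl⟩ : (p.1 ∈ A ∧ p.2 ∈ B) ∧ p.1 + p.2 = x := by simpa using hp
      simpa using ⟨hb, ha⟩)
    (fun b hb => by simpa [and_comm] using hb)
    (fun p hp => Prod.ext (sub_eq_of_eq_add (mem_filter.1 hp).2.symm) rfl)
    (fun b _ => rfl)

lemma addConvolution_union_le (A₁ A₂ B : Finset G) (x : G) :
    (A₁ ∪ A₂).addConvolution B x ≤ A₁.addConvolution B x + A₂.addConvolution B x := by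
  simp_rw [addConvolution_eq_card_filter_sub_mem, mem_union, filter_or]
  exact card_union_le _ _

lemma addEnergy_neg_right (A B : Finset G) : A.addEnergy (-B) = A.addEnergy B :=
  card_equiv ((Equiv.refl (G × G)).prodCongr
    ((Equiv.prodComm G G).trans ((Equiv.neg G).prodCongr (Equiv.neg G)))) fun z => by
    simp only [mem_filter, mem_product, Equiv.prodCongr_apply, Prod.map_fst, Prod.map_snd,
      Equiv.refl_apply, Equiv.trans_apply, Equiv.prodComm_apply, Equiv.neg_apply, mem_neg',
      Prod.fst_swap, Prod.snd_swap]
    rw [← sub_eq_add_neg, ← sub_eq_add_neg, sub_eq_sub_iff_add_eq_add]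
    tauto

lemma addEnergy_eq_sum_addConvolution_sq (A B : Finset G) :
    A.addEnergy B = ∑ x ∈ A + B, A.addConvolution B x ^ 2 :=
  addEnergy_eq_sum_sq' A B

lemma addEnergy_eq_sum_addConvolution_neg_mul (A B : Finset G) :
    A.addEnergy B = ∑ x ∈ A + -A, A.addConvolution (-A) x * B.addConvolution (-B) x := by
  have hmaps : ∀ z ∈ {z ∈ (A ×ˢ A) ×ˢ B ×ˢ B | z.1.1 + z.2.1 = z.1.2 + z.2.2},
      z.1.1 - z.1.2 ∈ A + -A := fun z hz => by
    simp only [mem_filter, mem_product] at hz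
    rw [← sub_eq_add_neg]
    exact sub_mem_sub hz.1.1.1 hz.1.1.2
  refine (card_eq_sum_card_fiberwise hmaps).trans (sum_congr rfl fun x _ => ?_)
  rw [← card_sub_eq, ← card_sub_eq, ← card_product]
  refine card_equiv ((Equiv.refl (G × G)).prodCongr (Equiv.prodComm G G)) fun z => ?_
  have hx : z.1.1 + z.2.1 = z.1.2 + z.2.2 ↔ z.1.1 - z.1.2 = z.2.2 - z.2.1 := by
    rw [sub_eq_sub_iff_add_eq_add, add_comm z.2.2]
  simp only [mem_filter, mem_product, Equiv.prodCongr_apply, Prod.map_fst, Prod.map_snd,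
    Equiv.refl_apply, Equiv.prodComm_apply, Prod.fst_swap, Prod.snd_swap, hx]
  grind

lemma sum_addConvolution_inter_vadd_le (A T : Finset G) (x : G) :
    ∑ s ∈ T, (A ∩ (s +ᵥ A)).addConvolution (-(A ∩ (s +ᵥ A))) x ≤ A.addConvolution (-A) x ^ 2 := by
  set Aₓ := A ∩ (x +ᵥ A) with hAₓ
  have hcomm : ∀ s : G, (A ∩ (s +ᵥ A)) ∩ (x +ᵥ (A ∩ (s +ᵥ A))) = Aₓ ∩ (s +ᵥ Aₓ) := fun s => by
    rw [hAₓ, vadd_finset_inter, vadd_finset_inter, vadd_comm x s, inter_inter_inter_comm]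
  calc ∑ s ∈ T, (A ∩ (s +ᵥ A)).addConvolution (-(A ∩ (s +ᵥ A))) x
      = ∑ s ∈ T, Aₓ.addConvolution (-Aₓ) s := by simp_rw [← card_inter_vadd, hcomm]
    _ ≤ #Aₓ * #(-Aₓ) := by
        rw [← card_product]
        exact (sum_card_fiberwise_eq_card_filter ..).trans_le (card_filter_le ..)
    _ = A.addConvolution (-A) x ^ 2 := by rw [card_neg, hAₓ, card_inter_vadd, sq]

lemma sum_addEnergy_inter_vadd_le (A T : Finset G) :
    ∑ s ∈ T, A.addEnergy (A ∩ (s +ᵥ A)) ≤ ∑ x ∈ A + -A, A.addConvolution (-A) x ^ 3 := by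
  simp_rw [addEnergy_eq_sum_addConvolution_neg_mul, pow_succ' _ 2]
  rw [sum_comm]
  simp_rw [← mul_sum]
  gcongr
  exact sum_addConvolution_inter_vadd_le A T _

lemma add_inter_vadd_subset (A : Finset G) (s : G) :
    A + A ∩ (s +ᵥ A) ⊆ (A + A) ∩ (s +ᵥ (A + A)) := by
  refine subset_inter (add_subset_add_left inter_subset_left) ?_
  rw [← vadd_add_assoc, add_comm (s +ᵥ A)]
  exact add_subset_add_left inter_subset_right

lemma card_sq_mul_addConvolution_sq_le (A : Finset G) (s : G) :
    #A ^ 2 * A.addConvolution (-A) s ^ 2 ≤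
      (A + A).addConvolution (-(A + A)) s * A.addEnergy (A ∩ (s +ᵥ A)) := by
  rw [← card_inter_vadd, ← card_inter_vadd]
  refine (le_card_add_mul_addEnergy _ _).trans ?_
  gcongr
  exact add_inter_vadd_subset A s

-- Multiplied by `r s`, the inequality `card_sq_mul_addConvolution_sq_le` becomes ready for
-- Cauchy–Schwarz over `s`, in which `∑ s, r s * (A + A).addConvolution (-(A + A)) s` is an energy.
lemma card_sq_mul_sq_sum_rpow_le (A : Finset G) :
    (#A : ℝ) ^ 2 * (∑ s ∈ A + -A, (A.addConvolution (-A) s : ℝ) ^ (3 / 2 : ℝ)) ^ 2 ≤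
      A.addEnergy (A + A) * ∑ s ∈ A + -A, (A.addConvolution (-A) s : ℝ) ^ 3 := by
  set r := A.addConvolution (-A)
  rw [← mul_pow, mul_sum]
  refine (sum_sq_le_sum_mul_sum_of_sq_le_mul (A + -A)
    (f := fun s => (r s * (A + A).addConvolution (-(A + A)) s : ℝ))
    (g := fun s => (A.addEnergy (A ∩ (s +ᵥ A)) : ℝ))
    (fun _ _ => by positivity) (fun _ _ => by positivity) fun s _ => ?_).trans ?_
  · have hrpow : ((r s : ℝ) ^ (3 / 2 : ℝ)) ^ 2 = r s ^ 3 := by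
      rw [← Real.rpow_mul_natCast (Nat.cast_nonneg _)]
      norm_num
    have hs : (#A : ℝ) ^ 2 * r s ^ 2 ≤
        (A + A).addConvolution (-(A + A)) s * A.addEnergy (A ∩ (s +ᵥ A)) := by
      exact_mod_cast card_sq_mul_addConvolution_sq_le A s
    calc ((#A : ℝ) * (r s : ℝ) ^ (3 / 2 : ℝ)) ^ 2 = r s * ((#A : ℝ) ^ 2 * r s ^ 2) := by
          rw [mul_pow, hrpow]; ring
      _ ≤ (r s : ℝ) * ((A + A).addConvolution (-(A + A)) s * A.addEnergy (A ∩ (s +ᵥ A))) := by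
          gcongr
      _ = _ := (mul_assoc ..).symm
  · rw [addEnergy_eq_sum_addConvolution_neg_mul]
    push_cast
    refine mul_le_mul_of_nonneg_left ?_ (by positivity)
    exact_mod_cast sum_addEnergy_inter_vadd_le A (A + -A)

end Energy

section SzemerediTrotterType

variable {G : Type*} [AddCommGroup G] [DecidableEq G] {A : Finset G} {κ : ℝ}

/-- Sets of Szemerédi–Trotter type with parameter `κ`: for every `B`, at most
`κ * #A * #B ^ 2 / τ ^ 3` elements have at least `τ` representations as an element of `A` plus an
element of `B`. Convex sets are the motivating example. -/
def IsSzemerediTrotterType (A : Finset G) (κ : ℝ) : Prop :=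
  ∀ B : Finset G, WeakLpBound (A + B) (A.addConvolution B) 3 (κ * #A * #B ^ 2)

namespace IsSzemerediTrotterType

lemma sq_addEnergy_le (h : IsSzemerediTrotterType A κ) (B : Finset G) :
    (A.addEnergy B : ℝ) ^ 2 ≤ 12 * κ * #A ^ 2 * #B ^ 3 := by
  have hsum : ∑ x ∈ A + B, (A.addConvolution B x : ℝ) = #A * #B := by
    exact_mod_cast sum_addConvolution A B
  rw [addEnergy_eq_sum_addConvolution_sq]
  push_cast
  refine (h B).sq_sum_sq_le.trans_eq ?_
  rw [hsum]
  ring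

lemma addEnergy_self_pow_three_le (h : IsSzemerediTrotterType A κ) :
    (A.addEnergy A : ℝ) ^ 3 ≤
      24 * κ * #A ^ 3 * (∑ s ∈ A + -A, (A.addConvolution (-A) s : ℝ) ^ (3 / 2 : ℝ)) ^ 2 := by
  rw [← addEnergy_neg_right, addEnergy_eq_sum_addConvolution_sq]
  push_cast
  refine (h (-A)).sum_sq_pow_three_le.trans_eq ?_
  rw [card_neg]
  ring

lemma sum_addConvolution_pow_three_le (h : IsSzemerediTrotterType A κ) :
    ∑ s ∈ A + -A, (A.addConvolution (-A) s : ℝ) ^ 3 ≤ 3 * κ * #A ^ 3 * (1 + Real.log #A) := by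
  refine ((h (-A)).sum_pow_succ_le_mul_log fun s _ => addConvolution_le_card_left).trans_eq ?_
  rw [card_neg]
  push_cast
  ring

lemma nonneg (h : IsSzemerediTrotterType A κ) (hA : A.Nonempty) : 0 ≤ κ := by
  have := hA.card_pos
  have := (h {0}).nonneg
  rw [card_singleton, Nat.cast_one, one_pow, mul_one] at this
  exact nonneg_of_mul_nonneg_left this (by positivity)

lemma addEnergy_self_pow_six_le (h : IsSzemerediTrotterType A κ) (hA : A.Nonempty) :
    (A.addEnergy A : ℝ) ^ 6 ≤
      62208 * κ ^ 5 * #A ^ 10 * #(A + A) ^ 3 * (1 + Real.log #A) ^ 2 := by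
  have hκ := h.nonneg hA
  have hA₀ : (0 : ℝ) < #A := mod_cast hA.card_pos
  have := Real.log_natCast_nonneg #A
  set E := (A.addEnergy A : ℝ)
  set E' := (A.addEnergy (A + A) : ℝ)
  set S := ∑ s ∈ A + -A, (A.addConvolution (-A) s : ℝ) ^ 3
  set F := ∑ s ∈ A + -A, (A.addConvolution (-A) s : ℝ) ^ (3 / 2 : ℝ)
  have hcube : E ^ 3 * #A ^ 2 ≤ 24 * κ * #A ^ 3 * (E' * S) :=
    calc E ^ 3 * #A ^ 2 ≤ 24 * κ * #A ^ 3 * F ^ 2 * #A ^ 2 := by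
          gcongr; exact h.addEnergy_self_pow_three_le
      _ = 24 * κ * #A ^ 3 * (#A ^ 2 * F ^ 2) := by ring
      _ ≤ _ := mul_le_mul_of_nonneg_left (card_sq_mul_sq_sum_rpow_le A) (by positivity)
  refine le_of_mul_le_mul_right ?_ (pow_pos hA₀ 4)
  calc E ^ 6 * #A ^ 4 = (E ^ 3 * #A ^ 2) ^ 2 := by ring
    _ ≤ (24 * κ * #A ^ 3 * (E' * S)) ^ 2 := by gcongr
    _ = 576 * κ ^ 2 * #A ^ 6 * E' ^ 2 * S ^ 2 := by ring
    _ ≤ 576 * κ ^ 2 * #A ^ 6 * (12 * κ * #A ^ 2 * #(A + A) ^ 3) *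
          (3 * κ * #A ^ 3 * (1 + Real.log #A)) ^ 2 := by
        gcongr
        · exact h.sq_addEnergy_le (A + A)
        · exact h.sum_addConvolution_pow_three_le
    _ = _ := by ring

lemma card_pow_fourteen_le (h : IsSzemerediTrotterType A κ) :
    (#A : ℝ) ^ 14 ≤ 62208 * κ ^ 5 * #(A + A) ^ 9 * (1 + Real.log #A) ^ 2 := by
  obtain rfl | hA := A.eq_empty_or_nonempty
  · simp
  have hA₀ : (0 : ℝ) < #A := mod_cast hA.card_pos
  have hCS : (#A : ℝ) ^ 4 ≤ #(A + A) * A.addEnergy A := by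
    exact_mod_cast (le_card_add_mul_addEnergy A A).trans_eq' (by ring)
  refine le_of_mul_le_mul_right ?_ (pow_pos hA₀ 10)
  calc (#A : ℝ) ^ 14 * #A ^ 10 = (#A ^ 4) ^ 6 := by ring
    _ ≤ (#(A + A) * A.addEnergy A : ℝ) ^ 6 := by gcongr
    _ = #(A + A) ^ 6 * (A.addEnergy A : ℝ) ^ 6 := by ring
    _ ≤ #(A + A) ^ 6 *
          (62208 * κ ^ 5 * #A ^ 10 * #(A + A) ^ 3 * (1 + Real.log #A) ^ 2) := by
        gcongr; exact h.addEnergy_self_pow_six_le hA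
    _ = _ := by ring

end IsSzemerediTrotterType

end SzemerediTrotterType

section ReflectedGraph

variable {G H : Type*} [AddCommGroup G] [Add H] {f : G → H}

/-- The part over `B` of the graph of `x ↦ f (s - x) + c`, restricted to arguments `s - x ∈ A`.
These are the curves of the incidence problem: for `b ∈ B` and `a ∈ A` with `a + b = s` they pass
through the point `(b, f a + c)`. -/
def reflectedGraph [DecidableEq G] [DecidableEq H] (f : G → H) (A B : Finset G) (s : G) (c : H) :
    Finset (G × H) :=
  {b ∈ B | s - b ∈ A}.image fun b => (b, f (s - b) + c)

section DecidableEq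

variable [DecidableEq G] [DecidableEq H]

lemma mem_reflectedGraph {A B : Finset G} {s : G} {c : H} {p : G × H} :
    p ∈ reflectedGraph f A B s c ↔ p.1 ∈ B ∧ s - p.1 ∈ A ∧ p.2 = f (s - p.1) + c := by
  simp only [reflectedGraph, mem_image, mem_filter]
  constructor
  · rintro ⟨b, ⟨hb, hs⟩, rfl⟩
    exact ⟨hb, hs, rfl⟩
  · rintro ⟨hb, hs, hp⟩
    exact ⟨p.1, ⟨hb, hs⟩, Prod.ext rfl hp.symm⟩

lemma card_reflectedGraph (f : G → H) (A B : Finset G) (s : G) (c : H) :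
    #(reflectedGraph f A B s c) = A.addConvolution B s := by
  rw [addConvolution_eq_card_filter_sub_mem, reflectedGraph,
    card_image_of_injective _ fun b b' h => (Prod.ext_iff.1 h).1]

lemma reflectedGraph_subset {A A' B : Finset G} {C : Finset H} {s : G} {c : H} (hA : A' ⊆ A)
    (hc : c ∈ C) : reflectedGraph f A' B s c ⊆ B ×ˢ (A.image f + C) := fun p hp => by
  obtain ⟨hb, hs, hp⟩ := mem_reflectedGraph.1 hp
  rw [mem_product, hp]
  exact ⟨hb, add_mem_add (mem_image_of_mem f (hA hs)) hc⟩

end DecidableEq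

variable [LinearOrder G] [IsOrderedAddMonoid G] [LinearOrder H] [AddRightMono H] {A : Finset G}

lemma monovaryOn_reflectedGraph (hf : AntitoneOn f A) (B : Finset G) (s : G) (c : H) :
    MonovaryOn Prod.snd Prod.fst (reflectedGraph f A B s c : Set (G × H)) :=
  fun p hp p' hp' hlt => by
    obtain ⟨-, hs, hp⟩ := mem_reflectedGraph.1 hp
    obtain ⟨-, hs', hp'⟩ := mem_reflectedGraph.1 hp'
    rw [hp, hp']
    gcongr
    exact hf hs' hs (sub_le_sub_left hlt.le s)

lemma antivaryOn_reflectedGraph (hf : MonotoneOn f A) (B : Finset G) (s : G) (c : H) :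
    AntivaryOn Prod.snd Prod.fst (reflectedGraph f A B s c : Set (G × H)) :=
  fun p hp p' hp' hlt => by
    obtain ⟨-, hs, hp⟩ := mem_reflectedGraph.1 hp
    obtain ⟨-, hs', hp'⟩ := mem_reflectedGraph.1 hp'
    rw [hp, hp']
    gcongr
    exact hf hs' hs (sub_le_sub_left hlt.le s)

end ReflectedGraph

section Convex

variable {𝕜 : Type*} [Field 𝕜] [LinearOrder 𝕜] [IsStrictOrderedRing 𝕜] {f : 𝕜 → 𝕜} {I : Set 𝕜}
  {A A' B C S : Finset 𝕜}

lemma sub_lt_sub_of_strictConvexOn (hf : StrictConvexOn 𝕜 I f) {u v d : 𝕜} (hu : u ∈ I)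
    (hud : u + d ∈ I) (hv : v ∈ I) (hvd : v + d ∈ I) (huv : u < v) (hd : 0 < d) :
    f (u + d) - f u < f (v + d) - f v := by
  have hslope_u : (f (u + d) - f u) / (u + d - u) < (f (v + d) - f u) / (v + d - u) :=
    hf.secant_strict_mono hu hud hvd (by linarith) (by linarith) (by linarith)
  have hslope_v : (f u - f (v + d)) / (u - (v + d)) < (f v - f (v + d)) / (v - (v + d)) :=
    hf.secant_strict_mono hvd hu hv (by linarith) (by linarith) huv
  rw [← neg_sub, ← neg_sub (v + d) u, neg_div_neg_eq, ← neg_sub _ (f v), ← neg_sub _ v,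
    neg_div_neg_eq, add_sub_cancel_left] at hslope_v
  rw [add_sub_cancel_left] at hslope_u
  exact (div_lt_div_iff_of_pos_right hd).1 (hslope_u.trans hslope_v)

lemma eq_of_sub_eq_sub_of_strictConvexOn (hf : StrictConvexOn 𝕜 I f) {u v d : 𝕜} (hu : u ∈ I)
    (hud : u + d ∈ I) (hv : v ∈ I) (hvd : v + d ∈ I) (hd : d ≠ 0)
    (h : f (u + d) - f u = f (v + d) - f v) : u = v := by
  wlog hpos : 0 < d generalizing u v d
  · refine add_right_cancel (b := d) (this (d := -d) hud ?_ hvd ?_ (neg_ne_zero.2 hd) ?_ ?_)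
    · rwa [add_neg_cancel_right]
    · rwa [add_neg_cancel_right]
    · rw [add_neg_cancel_right, add_neg_cancel_right, ← neg_sub, h, neg_sub]
    · exact neg_pos.2 (hd.lt_of_le (not_lt.1 hpos))
  by_contra hne
  rcases lt_or_gt_of_ne hne with huv | hvu
  · exact (sub_lt_sub_of_strictConvexOn hf hu hud hv hvd huv hpos).ne h
  · exact (sub_lt_sub_of_strictConvexOn hf hv hvd hu hud hvu hpos).ne h.symm

lemma exists_strictAntiOn_union_strictMonoOn (hf : StrictConvexOn 𝕜 I f) (hA : ↑A ⊆ I) :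
    ∃ A₁ A₂ : Finset 𝕜, A₁ ∪ A₂ = A ∧ StrictAntiOn f A₁ ∧ StrictMonoOn f A₂ := by
  refine ⟨{x ∈ A | ∃ y ∈ A, x < y ∧ f y ≤ f x}, {x ∈ A | ¬∃ y ∈ A, x < y ∧ f y ≤ f x},
    filter_union_filter_not_eq _ A, fun x hx x' hx' hlt => ?_, fun x hx x' hx' hlt => ?_⟩
  · obtain ⟨-, y, hy, hx'y, hfy⟩ := mem_filter.1 hx'
    by_contra! hle
    have hmax : f x' < max (f x) (f y) :=
      hf.lt_on_openSegment (hA (mem_filter.1 hx).1) (hA hy) (hlt.trans hx'y).ne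
        (by rw [openSegment_eq_Ioo (hlt.trans hx'y)]; exact ⟨hlt, hx'y⟩)
    exact hmax.not_ge (max_le hle hfy)
  · by_contra! hle
    exact (mem_filter.1 hx).2 ⟨x', (mem_filter.1 hx').1, hlt, hle⟩

lemma card_le_two_mul_card_image_of_strictConvexOn (hf : StrictConvexOn 𝕜 I f) (hA : ↑A ⊆ I) :
    #A ≤ 2 * #(A.image f) := by
  obtain ⟨A₁, A₂, rfl, hA₁, hA₂⟩ := exists_strictAntiOn_union_strictMonoOn hf hA
  calc #(A₁ ∪ A₂) ≤ #A₁ + #A₂ := card_union_le _ _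
    _ = #(A₁.image f) + #(A₂.image f) := by
        rw [card_image_of_injOn hA₁.injOn, card_image_of_injOn hA₂.injOn]
    _ ≤ #((A₁ ∪ A₂).image f) + #((A₁ ∪ A₂).image f) := by
        gcongr
        exacts [subset_union_left, subset_union_right]
    _ = _ := (two_mul _).symm

lemma reflectedGraph_inter_subsingleton (hf : StrictConvexOn 𝕜 I f) (hA : ↑A ⊆ I)
    (hA' : ↑A' ⊆ I) {s s' c c' : 𝕜} (hne : (s, c) ≠ (s', c')) :
    (reflectedGraph f A B s c ∩ reflectedGraph f A' B s' c' : Set (𝕜 × 𝕜)).Subsingleton := by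
  rintro p ⟨hp, hp'⟩ q ⟨hq, hq'⟩
  obtain ⟨-, hps, hp⟩ := mem_reflectedGraph.1 hp
  obtain ⟨-, hps', hp'⟩ := mem_reflectedGraph.1 hp'
  obtain ⟨-, hqs, hq⟩ := mem_reflectedGraph.1 hq
  obtain ⟨-, hqs', hq'⟩ := mem_reflectedGraph.1 hq'
  by_contra hpq
  have hfst : p.1 ≠ q.1 := fun h => hpq (Prod.ext h (by rw [hp, hq, h]))
  have hs : s = s' := by
    refine sub_left_injective (b := q.1) ?_
    have hadd : ∀ x, x - q.1 + (q.1 - p.1) = x - p.1 := fun x => by ring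
    refine eq_of_sub_eq_sub_of_strictConvexOn hf (hA hqs) (d := q.1 - p.1) ?_ (hA' hqs') ?_
      (sub_ne_zero.2 hfst.symm) ?_
    · rw [hadd]; exact hA hps
    · rw [hadd]; exact hA' hps'
    · rw [hadd, hadd]; linarith
  have hc : c = c' := by
    rw [hp, hs] at hp'
    exact add_left_cancel hp'
  exact hne (by rw [hs, hc])

lemma card_mul_card_mul_pow_three_le_of_strictMonoOn (hf : StrictConvexOn 𝕜 I f) (hA : ↑A ⊆ I)
    {P : 𝕜 → Finset 𝕜} (hP : ∀ s ∈ S, P s ⊆ A)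
    (hmono : ∀ s ∈ S, StrictAntiOn f (P s) ∨ StrictMonoOn f (P s)) {τ : ℕ} (hτ : 4 ≤ τ)
    (hS : ∀ s ∈ S, τ ≤ (P s).addConvolution B s) :
    #S * #C * τ ^ 3 ≤ 512 * #B ^ 2 * #(A.image f + C) ^ 2 := by
  obtain rfl | ⟨s, hs⟩ := S.eq_empty_or_nonempty
  · simp
  obtain rfl | hC := C.eq_empty_or_nonempty
  · simp
  have hinj : Set.InjOn f (P s) := (hmono s hs).elim StrictAntiOn.injOn StrictMonoOn.injOn
  have hτW : τ ≤ #(A.image f + C) :=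
    calc τ ≤ #(P s) := (hS s hs).trans addConvolution_le_card_left
      _ = #((P s).image f) := (card_image_of_injOn hinj).symm
      _ ≤ #(A.image f) := card_le_card (image_subset_image (hP s hs))
      _ ≤ #(A.image f + C) := card_le_card_add_right hC
  rw [← card_product]
  refine card_mul_pow_three_le_of_curves
    (Γ := fun q : 𝕜 × 𝕜 => reflectedGraph f (P q.1) B q.1 q.2) hτ
    ((hS s hs).trans addConvolution_le_card_right) hτW ?_ ?_ ?_ ?_
  · intro q hq
    exact reflectedGraph_subset (hP _ (mem_product.1 hq).1) (mem_product.1 hq).2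
  · intro q hq
    exact (hmono _ (mem_product.1 hq).1).imp
      (fun h => monovaryOn_reflectedGraph h.antitoneOn _ _ _)
      fun h => antivaryOn_reflectedGraph h.monotoneOn _ _ _
  · intro q hq q' hq' hne
    have hI : ∀ r ∈ S ×ˢ C, ↑(P r.1) ⊆ I := fun r hr =>
      (coe_subset.2 (hP _ (mem_product.1 hr).1)).trans hA
    exact reflectedGraph_inter_subsingleton hf (hI q hq) (hI q' hq') hne
  · intro q hq
    rw [card_reflectedGraph]
    exact hS _ (mem_product.1 hq).1

lemma card_mul_card_le_of_addConvolution_pos (hf : StrictConvexOn 𝕜 I f) (hA : ↑A ⊆ I)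
    (hS : ∀ s ∈ S, 0 < A.addConvolution B s) :
    #S * #C ≤ 2 * #B ^ 2 * #(A.image f + C) ^ 2 := by
  have hSsub : S ⊆ A + B := fun s hs => addConvolution_pos.1 (hS s hs)
  obtain rfl | hA₀ := A.eq_empty_or_nonempty
  · simp [subset_empty.1 (hSsub.trans_eq (empty_add B))]
  obtain rfl | hC := C.eq_empty_or_nonempty
  · simp
  calc #S * #C ≤ #A * #B * #C := by
        gcongr
        exact (card_le_card hSsub).trans card_add_le
    _ ≤ (2 * #(A.image f + C)) * #B * #(A.image f + C) := by
        have hAM : #A ≤ 2 * #(A.image f + C) :=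
          (card_le_two_mul_card_image_of_strictConvexOn hf hA).trans
            (Nat.mul_le_mul_left 2 (card_le_card_add_right hC))
        have hCM : #C ≤ #(A.image f + C) := card_le_card_add_left (hA₀.image f)
        exact Nat.mul_le_mul (Nat.mul_le_mul_right _ hAM) hCM
    _ = 2 * #B * #(A.image f + C) ^ 2 := by ring
    _ ≤ _ := by gcongr; exact Nat.le_self_pow two_ne_zero _

lemma card_mul_card_mul_pow_three_le_of_strictConvexOn (hf : StrictConvexOn 𝕜 I f) (hA : ↑A ⊆ I)
    {τ : ℕ} (hS : ∀ s ∈ S, τ ≤ A.addConvolution B s) :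
    #S * #C * τ ^ 3 ≤ 4096 * #B ^ 2 * #(A.image f + C) ^ 2 := by
  obtain rfl | hτ₀ := τ.eq_zero_or_pos
  · simp
  obtain hτ | hτ := lt_or_ge τ 7
  · have hτ₆ : τ ≤ 6 := Nat.le_of_lt_succ hτ
    calc #S * #C * τ ^ 3 ≤ 2 * #B ^ 2 * #(A.image f + C) ^ 2 * 6 ^ 3 :=
          Nat.mul_le_mul (card_mul_card_le_of_addConvolution_pos hf hA fun s hs =>
            hτ₀.trans_le (hS s hs)) (by gcongr)
      _ = 432 * #B ^ 2 * #(A.image f + C) ^ 2 := by ring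
      _ ≤ _ := by gcongr; norm_num
  obtain ⟨A₁, A₂, hA₁₂, hA₁, hA₂⟩ := exists_strictAntiOn_union_strictMonoOn hf hA
  have hhalf : ∀ s ∈ S, ∃ P ⊆ A, (StrictAntiOn f P ∨ StrictMonoOn f P) ∧
      (τ + 1) / 2 ≤ P.addConvolution B s := by
    intro s hs
    have := addConvolution_union_le A₁ A₂ B s
    rw [hA₁₂] at this
    have := hS s hs
    obtain h | h : (τ + 1) / 2 ≤ A₁.addConvolution B s ∨ (τ + 1) / 2 ≤ A₂.addConvolution B s := by
      omega
    · exact ⟨A₁, hA₁₂ ▸ subset_union_left, .inl hA₁, h⟩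
    · exact ⟨A₂, hA₁₂ ▸ subset_union_right, .inr hA₂, h⟩
  choose! P hPA hPmono hPτ using hhalf
  calc #S * #C * τ ^ 3 ≤ #S * #C * (2 * ((τ + 1) / 2)) ^ 3 := by gcongr; omega
    _ = 8 * (#S * #C * ((τ + 1) / 2) ^ 3) := by ring
    _ ≤ 8 * (512 * #B ^ 2 * #(A.image f + C) ^ 2) := by
        gcongr 8 * ?_
        exact card_mul_card_mul_pow_three_le_of_strictMonoOn hf hA hPA hPmono (by omega) hPτ
    _ = _ := by ring

lemma isSzemerediTrotterType_of_strictConvexOn (hf : StrictConvexOn 𝕜 I f) (hA : ↑A ⊆ I)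
    (hA₀ : A.Nonempty) (hC : C.Nonempty) :
    IsSzemerediTrotterType A (4096 * #(A.image f + C) ^ 2 / (#A * #C)) := by
  intro B τ _
  have := hA₀.card_pos
  have hC₀ : (0 : ℝ) < #C := mod_cast hC.card_pos
  have hpop : (#{s ∈ A + B | τ ≤ A.addConvolution B s} : ℝ) * #C * (τ : ℝ) ^ 3 ≤
      4096 * #B ^ 2 * #(A.image f + C) ^ 2 := by
    exact_mod_cast card_mul_card_mul_pow_three_le_of_strictConvexOn hf hA
      fun s hs => (mem_filter.1 hs).2
  refine le_of_mul_le_mul_right ?_ hC₀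
  calc _ = (#{s ∈ A + B | τ ≤ A.addConvolution B s} : ℝ) * #C * (τ : ℝ) ^ 3 := by ring
    _ ≤ _ := hpop
    _ = _ := by field_simp

lemma card_pow_nineteen_mul_card_pow_five_le_of_strictConvexOn (hf : StrictConvexOn 𝕜 I f)
    (hA : ↑A ⊆ I) (C : Finset 𝕜) :
    (#A : ℝ) ^ 19 * #C ^ 5 ≤ 62208 * 4096 ^ 5 * (1 + Real.log #A) ^ 2 *
      (#(A.image f + C) ^ 10 * #(A + A) ^ 9) := by
  obtain rfl | hA₀ := A.eq_empty_or_nonempty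
  · simp
  obtain rfl | hC := C.eq_empty_or_nonempty
  · simp
  have hcard := (isSzemerediTrotterType_of_strictConvexOn hf hA hA₀ hC).card_pow_fourteen_le
  have := hA₀.card_pos
  have := hC.card_pos
  calc (#A : ℝ) ^ 19 * #C ^ 5 = #A ^ 14 * (#A * #C) ^ 5 := by ring
    _ ≤ _ := mul_le_mul_of_nonneg_right hcard (by positivity)
    _ = _ := by field_simp

end Convex

lemma one_add_log_le_three_mul_log {x : ℝ} (hx : 2 ≤ x) : 1 + Real.log x ≤ 3 * Real.log x := by
  have := Real.log_two_gt_d9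
  have := Real.log_le_log two_pos hx
  linarith

theorem stmt13_general {𝕜 : Type*} [Field 𝕜] [LinearOrder 𝕜] [IsStrictOrderedRing 𝕜]
    {f : 𝕜 → 𝕜} {I : Set 𝕜} (hf : StrictConvexOn 𝕜 I f) {A : Finset 𝕜} (hA : ↑A ⊆ I)
    (hA₂ : 2 ≤ #A) (C : Finset 𝕜) :
    (9 * 62208 * 4096 ^ 5 : ℝ)⁻¹ * (#A ^ 19 * #C ^ 5) / Real.log #A ^ 2 ≤
      #(A.image f + C) ^ 10 * #(A + A) ^ 9 := by
  have hA₂ : (2 : ℝ) ≤ #A := mod_cast hA₂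
  have hlog : 0 < Real.log #A := Real.log_pos (one_lt_two.trans_le hA₂)
  rw [div_le_iff₀ (by positivity), inv_mul_le_iff₀ (by positivity)]
  calc (#A : ℝ) ^ 19 * #C ^ 5 ≤ 62208 * 4096 ^ 5 * (1 + Real.log #A) ^ 2 *
        (#(A.image f + C) ^ 10 * #(A + A) ^ 9) :=
        card_pow_nineteen_mul_card_pow_five_le_of_strictConvexOn hf hA C
    _ ≤ 62208 * 4096 ^ 5 * (3 * Real.log #A) ^ 2 *
        (#(A.image f + C) ^ 10 * #(A + A) ^ 9) := by
        gcongr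
        exact one_add_log_le_three_mul_log hA₂
    _ = _ := by ring

theorem stmt13 : ∃ K : ℝ, 0 < K ∧
    ∀ f : ℝ → ℝ, Continuous f → StrictConvexOn ℝ Set.univ f →
    ∀ A C : Finset ℝ, (A.card : ℝ) / 2 ≤ (C.card : ℝ) → (C.card : ℝ) ≤ 2 * (A.card : ℝ) →
    2 ≤ A.card →
    ((A.image f + C).card : ℝ) ^ 10 * ((A + A).card : ℝ) ^ 9 ≥
      K * (A.card : ℝ) ^ 24 / (Real.log A.card) ^ 2 := by
  refine ⟨(32 * (9 * 62208 * 4096 ^ 5))⁻¹, by positivity, fun f _ hf A C hAC _ hA => ?_⟩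
  refine (stmt13_general hf (Set.subset_univ _) hA C).trans' ?_
  calc (32 * (9 * 62208 * 4096 ^ 5) : ℝ)⁻¹ * #A ^ 24 / Real.log #A ^ 2
      = (9 * 62208 * 4096 ^ 5 : ℝ)⁻¹ * (#A ^ 19 * (#A / 2) ^ 5) / Real.log #A ^ 2 := by ring
    _ ≤ _ := by gcongr
end

section
/- There exists an absolute constant K such that for every continuous strictly convex function f : ℝ → ℝ and every finite set A ⊂ ℝ with |A| ≥ 2, one has |A + f(A)| ≥ K · |A|^{24/19} / (log|A|)^{2/19}. -/
open Finset Pointwise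

/-!
Suppose that `f` is monotone on `A`, and let `P` be the part of its graph above `A`. By strict
convexity a nonzero vector is a difference of two points of `P` in at most one way, so two points
of the plane lie on at most one common translate of `P`. Cut a Cartesian product `S × Y` into
rectangular cells: a translate of the monotone curve `P` meets few cells, and counting the pairs of
incidences that share a cell gives a Szemerédi–Trotter type bound without any crossing numbers.

With `Y = f(A) + C` this bounds the number of elements having at least `τ` representations in
`A + B` by a multiple of `τ⁻³`. In the Katz–Koester inclusion `(A ∩ (A + s)) + f(A) ⊆
(A + f(A)) ∩ (A + f(A) + s)` the set on the left is large by Cauchy–Schwarz; summing over `s` bounds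
the moment of order `3/2` of the representation function of `A - A` in terms of the energy between
`A` and `A + f(A)`, which the weak third moment controls. Interpolating between this moment and the
weak third moment bounds the additive energy of `A`, and symmetrically that of `f(A)`; the claim
follows by Cauchy–Schwarz.

For general `f`, split `A` into two parts on each of which `f` is strictly monotone, and apply this
to the larger part.
-/

section Blocks

variable {α β : Type*}

lemma card_le_card_image_add_card_offDiag [DecidableEq β] (I : Finset α) (φ : α → β) :
    #I ≤ #(I.image φ) + #{x ∈ I.offDiag | φ x.1 = φ x.2} := by
  classical
  induction I using Finset.induction with
  | empty => simp
  | insert a I ha ih =>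
    have hpairs : {x ∈ I.offDiag | φ x.1 = φ x.2} ⊆ {x ∈ (insert a I).offDiag | φ x.1 = φ x.2} :=
      filter_subset_filter _ (offDiag_mono (subset_insert a I))
    rw [card_insert_of_notMem ha, image_insert]
    by_cases hφ : φ a ∈ I.image φ
    · obtain ⟨b, hb, hba⟩ := mem_image.1 hφ
      have hab : (a, b) ∉ {x ∈ I.offDiag | φ x.1 = φ x.2} := by simp [ha]
      have hnew := card_le_card (insert_subset (a := (a, b)) (by simp; grind) hpairs)
      rw [card_insert_of_notMem hab] at hnew
      rw [insert_eq_of_mem hφ]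
      lia
    · rw [card_insert_of_notMem hφ]
      have := card_le_card hpairs
      lia

lemma card_filter_product_self_le [DecidableEq β] {s : Finset α} {φ : α → β} {n : ℕ}
    (hφ : ∀ b, #{x ∈ s | φ x = b} ≤ n) : #{x ∈ s ×ˢ s | φ x.1 = φ x.2} ≤ #s * n := by
  calc #{x ∈ s ×ˢ s | φ x.1 = φ x.2} = ∑ y ∈ s, #{x ∈ s | φ x = φ y} := by
        simp_rw [card_filter, sum_product_right]
    _ ≤ #s * n := sum_le_card_nsmul s _ n fun y _ => hφ (φ y)

lemma card_le_of_monovaryOn_or_antivaryOn {Z : Finset (ℕ × ℕ)} {m n : ℕ}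
    (hm : ∀ z ∈ Z, z.1 ≤ m) (hn : ∀ z ∈ Z, z.2 ≤ n)
    (hZ : MonovaryOn Prod.snd Prod.fst (Z : Set (ℕ × ℕ)) ∨
      AntivaryOn Prod.snd Prod.fst (Z : Set (ℕ × ℕ))) : #Z ≤ m + n + 1 := by
  rw [← card_range (m + n + 1)]
  rcases hZ with hZ | hZ
  · refine card_le_card_of_injOn (fun z => z.1 + z.2) (fun z hz => ?_) fun z hz w hw hzw => ?_
    · have := hm z hz
      have := hn z hz
      simp only [coe_range, Set.mem_Iio]
      lia
    · have := @hZ z hz w hw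
      have := @hZ w hw z hz
      exact Prod.ext (by lia) (by lia)
  · refine card_le_card_of_injOn (fun z => z.1 + (n - z.2)) (fun z hz => ?_)
      fun z hz w hw hzw => ?_
    · have := hm z hz
      simp only [coe_range, Set.mem_Iio]
      lia
    · have := @hZ z hz w hw
      have := @hZ w hw z hz
      have := hn z hz
      have := hn w hw
      exact Prod.ext (by lia) (by lia)

lemma card_image_prodMap_le [LinearOrder α] [Preorder β] {P : Finset (α × β)}
    (hP : MonovaryOn Prod.snd Prod.fst (P : Set (α × β)) ∨
      AntivaryOn Prod.snd Prod.fst (P : Set (α × β)))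
    {u : α → ℕ} {v : β → ℕ} (hu : Monotone u) (hv : Monotone v) {m n : ℕ} (hm : ∀ x, u x ≤ m)
    (hn : ∀ y, v y ≤ n) : #(P.image (Prod.map u v)) ≤ m + n + 1 := by
  refine card_le_of_monovaryOn_or_antivaryOn (forall_mem_image.2 fun x _ => hm x.1)
    (forall_mem_image.2 fun x _ => hn x.2) (hP.imp (fun h => ?_) fun h => ?_)
  all_goals
    rw [coe_image]
    rintro _ ⟨x, hx, rfl⟩ _ ⟨y, hy, rfl⟩ hxy
    exact hv (h hx hy (hu.reflect_lt hxy))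

variable [LinearOrder α]

/-- The index of the block containing `x` when `S` is cut, in increasing order, into blocks of
size `h`. It is defined for every `x`, in `S` or not, so that it is monotone on the whole line. -/
def blockIndex (S : Finset α) (h : ℕ) (x : α) : ℕ :=
  #{y ∈ S | y < x} / h

lemma blockIndex_mono (S : Finset α) (h : ℕ) : Monotone (blockIndex S h) := fun _ _ hxy =>
  Nat.div_le_div_right (card_le_card (monotone_filter_right S fun _ _ hz => hz.trans_le hxy))

lemma blockIndex_le (S : Finset α) (h : ℕ) (x : α) : blockIndex S h x ≤ #S / h :=
  Nat.div_le_div_right (card_filter_le _ _)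

lemma strictMonoOn_card_filter_lt (S : Finset α) :
    StrictMonoOn (fun x => #{y ∈ S | y < x}) (S : Set α) := fun x hx _ _ hxy =>
  card_lt_card ⟨monotone_filter_right S fun _ _ hz => hz.trans hxy,
    fun hsub => lt_irrefl x (mem_filter.1 (hsub (mem_filter.2 ⟨hx, hxy⟩))).2⟩

lemma card_blockIndex_fiber_le (S : Finset α) {h : ℕ} (hh : 0 < h) (k : ℕ) :
    #{x ∈ S | blockIndex S h x = k} ≤ h := by
  calc #{x ∈ S | blockIndex S h x = k} ≤ #(Ico (k * h) (k * h + h)) := by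
        refine card_le_card_of_injOn (fun x => #{y ∈ S | y < x}) (fun x hx => ?_)
          ((strictMonoOn_card_filter_lt S).injOn.mono fun x hx => (mem_filter.1 hx).1)
        have := (Nat.div_eq_iff hh).1 (mem_filter.1 hx).2
        simp only [coe_Ico, Set.mem_Ico]
        lia
    _ = h := by simp

variable [LinearOrder β]

/-- The cell containing `z` when the grid `S × Y` is cut into cells of size at most `h × k`. -/
def gridCell (S : Finset α) (Y : Finset β) (h k : ℕ) : α × β → ℕ × ℕ :=
  Prod.map (blockIndex S h) (blockIndex Y k)

lemma card_filter_gridCell_eq_gridCell_le (S : Finset α) (Y : Finset β) {h k : ℕ} (hh : 0 < h)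
    (hk : 0 < k) :
    #{x ∈ (S ×ˢ Y) ×ˢ (S ×ˢ Y) | gridCell S Y h k x.1 = gridCell S Y h k x.2} ≤
      #S * #Y * (h * k) := by
  rw [← card_product S Y]
  refine card_filter_product_self_le fun c => ?_
  calc #{z ∈ S ×ˢ Y | gridCell S Y h k z = c}
      = #({x ∈ S | blockIndex S h x = c.1} ×ˢ {y ∈ Y | blockIndex Y k y = c.2}) := by
        simp only [← filter_product, gridCell, Prod.ext_iff, Prod.map_fst, Prod.map_snd]
    _ ≤ h * k := by
        rw [card_product]
        exact Nat.mul_le_mul (card_blockIndex_fiber_le S hh _) (card_blockIndex_fiber_le Y hk _)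

end Blocks

/-- The planar set `P` is a strictly monotone curve in which every nonzero difference vector is
represented only once. The condition that `P` is increasing or decreasing is stated through the
weak relations `MonovaryOn` and `AntivaryOn`; injectivity of the projections makes it strict. -/
structure IsSidonChain {G H : Type*} [AddCommGroup G] [LinearOrder G] [AddCommGroup H]
    [LinearOrder H] (P : Finset (G × H)) : Prop where
  injOn_fst : Set.InjOn Prod.fst (P : Set (G × H))
  injOn_snd : Set.InjOn Prod.snd (P : Set (G × H))
  monovaryOn_or_antivaryOn : MonovaryOn Prod.snd Prod.fst (P : Set (G × H)) ∨
    AntivaryOn Prod.snd Prod.fst (P : Set (G × H))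
  eq_of_sub_eq_sub : ∀ x ∈ P, ∀ y ∈ P, ∀ x' ∈ P, ∀ y' ∈ P, x ≠ y → x - y = x' - y' → x = x'

namespace IsSidonChain

section Incidences

variable {G H : Type*} [AddCommGroup G] [LinearOrder G] [AddCommGroup H] [LinearOrder H]
  {P : Finset (G × H)}

/-- By the Sidon property, two distinct points of the grid lie on at most one common translate. -/
lemma sum_card_offDiag_gridCell_le (hP : IsSidonChain P) (Q : Finset (G × H)) (S : Finset G)
    (Y : Finset H) {h k : ℕ} (hh : 0 < h) (hk : 0 < k) :
    ∑ t ∈ Q, #{x ∈ ({x ∈ P | x + t ∈ S ×ˢ Y} : Finset (G × H)).offDiag |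
      gridCell S Y h k (x.1 + t) = gridCell S Y h k (x.2 + t)} ≤ #S * #Y * (h * k) := by
  refine le_trans ?_ (card_filter_gridCell_eq_gridCell_le S Y hh hk)
  rw [← card_sigma]
  refine card_le_card_of_injOn (fun x => (x.2.1 + x.1, x.2.2 + x.1)) ?_ ?_
  · rintro ⟨t, x, y⟩ hx
    simp only [mem_coe, mem_sigma, mem_filter, mem_offDiag] at hx ⊢
    exact ⟨mk_mem_product hx.2.1.1.2 hx.2.1.2.1.2, hx.2.2⟩
  · rintro ⟨t, x, y⟩ hx ⟨t', x', y'⟩ hx' heq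
    simp only [mem_coe, mem_sigma, mem_filter, mem_offDiag] at hx hx'
    obtain ⟨-, ⟨⟨hxP, -⟩, ⟨hyP, -⟩, hxy⟩, -⟩ := hx
    obtain ⟨-, ⟨⟨hxP', -⟩, ⟨hyP', -⟩, -⟩, -⟩ := hx'
    obtain ⟨hfst, hsnd⟩ := Prod.mk.inj heq
    have hsub : x - y = x' - y' := by
      rw [← add_sub_add_right_eq_sub x y t, hfst, hsnd, add_sub_add_right_eq_sub]
    obtain rfl := hP.eq_of_sub_eq_sub x hxP y hyP x' hxP' y' hyP' hxy hsub
    obtain rfl := add_left_cancel hfst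
    obtain rfl := add_right_cancel hsnd
    rfl

variable [IsOrderedAddMonoid G] [IsOrderedAddMonoid H]

lemma card_image_gridCell_add_le (hP : IsSidonChain P) (S : Finset G) (Y : Finset H) (h k : ℕ)
    (t : G × H) : #(P.image fun x => gridCell S Y h k (x + t)) ≤ #S / h + #Y / k + 1 :=
  card_image_prodMap_le hP.monovaryOn_or_antivaryOn
    ((blockIndex_mono S h).comp fun _ _ hxy => add_le_add_left hxy t.1)
    ((blockIndex_mono Y k).comp fun _ _ hxy => add_le_add_left hxy t.2)
    (fun x => blockIndex_le S h (x + t.1)) fun y => blockIndex_le Y k (y + t.2)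

theorem sum_card_incidences_le (hP : IsSidonChain P) (Q : Finset (G × H)) (S : Finset G)
    (Y : Finset H) {h k : ℕ} (hh : 0 < h) (hk : 0 < k) :
    ∑ t ∈ Q, #{x ∈ P | x + t ∈ S ×ˢ Y} ≤
      #Q * (#S / h + #Y / k + 1) + #S * #Y * (h * k) := by
  have hcells : ∀ t ∈ Q, #({x ∈ P | x + t ∈ S ×ˢ Y}.image fun x => gridCell S Y h k (x + t)) ≤
      #S / h + #Y / k + 1 := fun t _ =>
    (card_le_card (image_subset_image (filter_subset _ P))).trans
      (hP.card_image_gridCell_add_le S Y h k t)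
  refine (sum_le_sum fun t _ => card_le_card_image_add_card_offDiag _
    fun x => gridCell S Y h k (x + t)).trans ?_
  rw [sum_add_distrib]
  exact add_le_add (sum_le_card_nsmul Q _ _ hcells) (hP.sum_card_offDiag_gridCell_le Q S Y hh hk)

end Incidences

end IsSidonChain

section Optimization

lemma exists_nat_ge_and_le_of_eight_le {u : ℝ} (hu : 8 ≤ u) :
    ∃ h : ℕ, 0 < h ∧ u ≤ h ∧ h ≤ 9 / 8 * u :=
  ⟨⌈u⌉₊, Nat.ceil_pos.2 (by linarith), Nat.le_ceil u,
    by linarith [Nat.ceil_lt_add_one (show 0 ≤ u by linarith)]⟩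

/-- The block sizes are chosen so that the term with the factor `b * c` is at most `3 / 8` of the
left-hand side. -/
lemma mul_cube_mul_le_of_forall_incidence_bound {σ t b c y : ℝ} (hσ : 0 ≤ σ) (ht : 0 < t)
    (hc : 0 ≤ c) (hcy : c ≤ y) (hty : t ≤ y) (htb : t ≤ b) (hσt : σ * t ≤ y * b)
    (hinc : ∀ h k : ℕ, 0 < h → 0 < k →
      σ * t * c ≤ b * c * (σ / h + y / k + 1) + σ * y * (h * k)) :
    σ * t ^ 3 * c ≤ 130 * b ^ 2 * y ^ 2 := by
  have hb : 0 < b := ht.trans_le htb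
  have hy : 0 < y := ht.trans_le hty
  rcases le_or_gt (t * σ) (8 * b) with hsmall | hlarge
  · calc σ * t ^ 3 * c = (t * σ) * (t * t * c) := by ring
      _ ≤ (8 * b) * (b * y * y) := by gcongr
      _ = 8 * (b ^ 2 * y ^ 2) := by ring
      _ ≤ 130 * (b ^ 2 * y ^ 2) := by gcongr; norm_num
      _ = 130 * b ^ 2 * y ^ 2 := by ring
  · have htσ : 0 < t * σ := by linarith
    obtain ⟨h, hh, hle, hge⟩ := exists_nat_ge_and_le_of_eight_le (u := 8 * b / t) (by
      rw [le_div_iff₀ ht]; linarith)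
    obtain ⟨k, hk, kle, kge⟩ := exists_nat_ge_and_le_of_eight_le (u := 8 * y * b / (t * σ)) (by
      rw [le_div_iff₀ htσ]; linarith)
    have hcols : σ / h ≤ t * σ / (8 * b) := by
      calc σ / h ≤ σ / (8 * b / t) := by gcongr
        _ = t * σ / (8 * b) := by field_simp
    have hrows : y / k ≤ t * σ / (8 * b) := by
      calc y / k ≤ y / (8 * y * b / (t * σ)) := by gcongr
        _ = t * σ / (8 * b) := by field_simp
    have hone : 1 ≤ t * σ / (8 * b) := by rw [le_div_iff₀ (by positivity)]; linarith
    have hcells : b * c * (σ / h + y / k + 1) ≤ 3 / 8 * (σ * t * c) := by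
      calc b * c * (σ / h + y / k + 1)
          ≤ b * c * (t * σ / (8 * b) + t * σ / (8 * b) + t * σ / (8 * b)) := by gcongr
        _ = 3 / 8 * (σ * t * c) := by field_simp; ring
    have hpairs : σ * y * (h * k) ≤ 81 * y ^ 2 * b ^ 2 / t ^ 2 := by
      have hσ' : σ ≠ 0 := right_ne_zero_of_mul htσ.ne'
      calc σ * y * (h * k)
          ≤ σ * y * ((9 / 8 * (8 * b / t)) * (9 / 8 * (8 * y * b / (t * σ)))) := by gcongr
        _ = 81 * y ^ 2 * b ^ 2 / t ^ 2 := by field_simp; ring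
    have hmain : 5 / 8 * (σ * t * c) ≤ 81 * y ^ 2 * b ^ 2 / t ^ 2 := by
      linarith [hinc h k hh hk]
    rw [le_div_iff₀ (by positivity)] at hmain
    have : 0 ≤ b ^ 2 * y ^ 2 := by positivity
    linarith

end Optimization

lemma sum_addConvolution_le {G : Type*} [AddGroup G] [DecidableEq G] (X B S : Finset G) :
    ∑ s ∈ S, X.addConvolution B s ≤ #X * #B := by
  simp_rw [← card_add_eq, sum_card_fiberwise_eq_card_filter, ← card_product]
  exact card_filter_le _ _

section RichSums

variable {G H : Type*} [AddCommGroup G] [LinearOrder G] [AddCommGroup H] [LinearOrder H]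
  {P : Finset (G × H)}

lemma card_mul_sum_addConvolution_le (hP : Set.InjOn Prod.fst (P : Set (G × H)))
    (B S : Finset G) (C : Finset H) :
    #C * ∑ s ∈ S, (P.image Prod.fst).addConvolution B s ≤
      ∑ t ∈ B ×ˢ C, #{x ∈ P | x + t ∈ S ×ˢ (P.image Prod.snd + C)} := by
  have hconv : ∀ s, (P.image Prod.fst).addConvolution B s = ∑ b ∈ B, #{x ∈ P | x.1 + b = s} := by
    intro s
    simp_rw [← card_add_eq, card_filter, sum_product_right, sum_image hP]
  calc #C * ∑ s ∈ S, (P.image Prod.fst).addConvolution B s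
      = ∑ t ∈ B ×ˢ C, #{x ∈ P | x.1 + t.1 ∈ S} := by
        simp_rw [hconv, sum_product]
        rw [sum_comm]
        simp_rw [sum_card_fiberwise_eq_card_filter, sum_const, smul_eq_mul, mul_sum]
    _ ≤ ∑ t ∈ B ×ˢ C, #{x ∈ P | x + t ∈ S ×ˢ (P.image Prod.snd + C)} := by
        refine sum_le_sum fun t ht => card_le_card fun x hx => ?_
        rw [mem_filter] at hx ⊢
        exact ⟨hx.1, mk_mem_product hx.2
          (add_mem_add (mem_image_of_mem _ hx.1) (mem_product.1 ht).2)⟩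

namespace IsSidonChain

variable [IsOrderedAddMonoid G] [IsOrderedAddMonoid H]

theorem card_mul_cube_mul_card_le (hP : IsSidonChain P) (B S : Finset G) {C : Finset H}
    (hC : C.Nonempty) {τ : ℕ} (hτ : 1 ≤ τ)
    (hS : ∀ s ∈ S, τ ≤ (P.image Prod.fst).addConvolution B s) :
    (#S : ℝ) * τ ^ 3 * #C ≤ 130 * #B ^ 2 * #(P.image Prod.snd + C) ^ 2 := by
  rcases S.eq_empty_or_nonempty with rfl | ⟨s, hs⟩
  · rw [card_empty, Nat.cast_zero, zero_mul, zero_mul]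
    positivity
  set U := P.image Prod.fst with hU
  set Y := P.image Prod.snd + C with hY
  have hUY : #U ≤ #Y := by
    calc #U ≤ #P := card_image_le
      _ = #(P.image Prod.snd) := (card_image_of_injOn hP.injOn_snd).symm
      _ ≤ #Y := card_le_card_add_right hC
  have hV : (P.image Prod.snd).Nonempty := by
    have : 0 < #U := hτ.trans ((hS s hs).trans addConvolution_le_card_left)
    simpa [hU] using this
  have hlower : #S * τ ≤ ∑ s ∈ S, U.addConvolution B s := card_nsmul_le_sum S _ τ hS
  have hinc : ∀ h k : ℕ, 0 < h → 0 < k →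
      #S * τ * #C ≤ #B * #C * (#S / h + #Y / k + 1) + #S * #Y * (h * k) := fun h k hh hk => by
    calc #S * τ * #C ≤ #C * ∑ s ∈ S, U.addConvolution B s := by
          rw [mul_comm]; exact Nat.mul_le_mul_left _ hlower
      _ ≤ ∑ t ∈ B ×ˢ C, #{x ∈ P | x + t ∈ S ×ˢ Y} :=
          card_mul_sum_addConvolution_le hP.injOn_fst B S C
      _ ≤ #B * #C * (#S / h + #Y / k + 1) + #S * #Y * (h * k) := by
          rw [← card_product]; exact hP.sum_card_incidences_le _ S Y hh hk
  refine mul_cube_mul_le_of_forall_incidence_bound (by positivity) (by exact_mod_cast hτ)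
    (by positivity) (by exact_mod_cast card_le_card_add_left hV)
    (by exact_mod_cast (hS s hs).trans (addConvolution_le_card_left.trans hUY))
    (by exact_mod_cast (hS s hs).trans addConvolution_le_card_right)
    (by exact_mod_cast hlower.trans ((sum_addConvolution_le U B S).trans
      (Nat.mul_le_mul_right _ hUY)))
    fun h k hh hk => ?_
  calc (#S : ℝ) * τ * #C
      ≤ #B * #C * ((#S / h : ℕ) + (#Y / k : ℕ) + 1) + #S * #Y * (h * k) := by
        exact_mod_cast hinc h k hh hk
    _ ≤ #B * #C * (#S / h + #Y / k + 1) + #S * #Y * (h * k) := by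
        gcongr <;> exact Nat.cast_div_le

end IsSidonChain

end RichSums

section WeakCubeBound

variable {ι : Type*} {T : Finset ι} {r : ι → ℕ}

lemma sum_sum_Ioc_eq_sum_card_level_mul {k n : ℕ} (g : ℕ → ℝ) (hr : ∀ s ∈ T, r s ≤ n) :
    ∑ s ∈ T, ∑ τ ∈ Ioc k (r s), g τ = ∑ τ ∈ Ioc k n, #{s ∈ T | τ ≤ r s} * g τ := by
  calc ∑ s ∈ T, ∑ τ ∈ Ioc k (r s), g τ = ∑ s ∈ T, ∑ τ ∈ Ioc k n, if τ ≤ r s then g τ else 0 := by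
        refine sum_congr rfl fun s hs => ?_
        rw [← sum_filter]
        refine sum_congr ?_ fun _ _ => rfl
        ext τ
        have := hr s hs
        simp only [mem_Ioc, mem_filter]
        lia
    _ = ∑ τ ∈ Ioc k n, #{s ∈ T | τ ≤ r s} * g τ := by
        rw [sum_comm]
        refine sum_congr rfl fun τ _ => ?_
        rw [← sum_filter, sum_const, nsmul_eq_mul]

lemma cube_le_sum_Ioc_three_mul_sq (n : ℕ) : (n : ℝ) ^ 3 ≤ ∑ τ ∈ Ioc 0 n, 3 * (τ : ℝ) ^ 2 := by
  induction n with
  | zero => simp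
  | succ n ih =>
    rw [sum_Ioc_succ_top (Nat.zero_le n)]
    push_cast
    nlinarith [n.cast_nonneg (α := ℝ)]

lemma sq_sub_sq_le_sum_Ioc_two_mul {k n : ℕ} (hkn : k ≤ n) :
    (n : ℝ) ^ 2 - k ^ 2 ≤ ∑ τ ∈ Ioc k n, 2 * (τ : ℝ) := by
  induction n, hkn using Nat.le_induction with
  | base => simp
  | succ n hn ih =>
    rw [sum_Ioc_succ_top hn]
    push_cast
    linarith

lemma sq_le_min_sq_add_sum_Ioc (n : ℕ) {Δ : ℝ} (hΔ : 0 ≤ Δ) :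
    (n : ℝ) ^ 2 ≤ min (n : ℝ) Δ ^ 2 + ∑ τ ∈ Ioc ⌊Δ⌋₊ n, 2 * (τ : ℝ) := by
  rcases le_or_gt (n : ℝ) Δ with h | h
  · rw [min_eq_left h]
    exact le_add_of_nonneg_right (sum_nonneg fun _ _ => by positivity)
  · rw [min_eq_right h.le]
    have hfloor : (⌊Δ⌋₊ : ℝ) ^ 2 ≤ Δ ^ 2 := by
      gcongr
      exact Nat.floor_le hΔ
    linarith [sq_sub_sq_le_sum_Ioc_two_mul (Nat.floor_le_of_le h.le)]

lemma min_sq_le_rpow_mul_rpow {x Δ a : ℝ} (hx : 0 ≤ x) (hΔ : 0 ≤ Δ) (ha : 0 ≤ a) (ha₂ : a ≤ 2) :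
    min x Δ ^ 2 ≤ Δ ^ (2 - a) * x ^ a := by
  have hmin : 0 ≤ min x Δ := le_min hx hΔ
  calc min x Δ ^ 2 = min x Δ ^ (2 - a) * min x Δ ^ a := by
        rw [← Real.rpow_add_of_nonneg hmin (by linarith) ha, sub_add_cancel, Real.rpow_two]
    _ ≤ Δ ^ (2 - a) * x ^ a := by
        gcongr
        · exact min_le_right x Δ
        · exact min_le_left x Δ

variable {Q : ℝ}

lemma sum_cube_le_of_card_level_mul_cube_le {n : ℕ} (hr : ∀ s ∈ T, r s ≤ n)
    (hQ : ∀ τ : ℕ, 1 ≤ τ → (#{s ∈ T | τ ≤ r s} : ℝ) * τ ^ 3 ≤ Q) :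
    ∑ s ∈ T, (r s : ℝ) ^ 3 ≤ 3 * Q * (1 + Real.log n) := by
  have hQ₀ : 0 ≤ Q := le_trans (by positivity) (hQ 1 le_rfl)
  calc ∑ s ∈ T, (r s : ℝ) ^ 3 ≤ ∑ s ∈ T, ∑ τ ∈ Ioc 0 (r s), 3 * (τ : ℝ) ^ 2 :=
        sum_le_sum fun s _ => cube_le_sum_Ioc_three_mul_sq _
    _ = ∑ τ ∈ Ioc 0 n, #{s ∈ T | τ ≤ r s} * (3 * (τ : ℝ) ^ 2) :=
        sum_sum_Ioc_eq_sum_card_level_mul (fun τ => 3 * (τ : ℝ) ^ 2) hr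
    _ ≤ ∑ τ ∈ Ioc 0 n, 3 * Q * (τ : ℝ)⁻¹ := by
        refine sum_le_sum fun τ hτ => ?_
        have hτ₁ : 1 ≤ τ := (mem_Ioc.1 hτ).1
        rw [← div_eq_mul_inv, le_div_iff₀ (by positivity)]
        linarith [hQ τ hτ₁]
    _ = 3 * Q * (harmonic n : ℝ) := by
        rw [← mul_sum, harmonic_eq_sum_Icc]
        push_cast
        rfl
    _ ≤ 3 * Q * (1 + Real.log n) := by
        gcongr
        exact harmonic_le_one_add_log n

lemma sum_sq_le_sum_min_sq_add {Δ : ℝ} (hΔ : 0 < Δ)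
    (hQ : ∀ τ : ℕ, 1 ≤ τ → (#{s ∈ T | τ ≤ r s} : ℝ) * τ ^ 3 ≤ Q) :
    ∑ s ∈ T, (r s : ℝ) ^ 2 ≤ ∑ s ∈ T, min (r s : ℝ) Δ ^ 2 + 4 * Q / Δ := by
  have hQ₀ : 0 ≤ Q := le_trans (by positivity) (hQ 1 le_rfl)
  set n := T.sup r
  have htail : ∑ τ ∈ Ioc ⌊Δ⌋₊ n, ((τ : ℝ) ^ 2)⁻¹ ≤ 2 / Δ := by
    calc ∑ τ ∈ Ioc ⌊Δ⌋₊ n, ((τ : ℝ) ^ 2)⁻¹ ≤ 2 / (⌊Δ⌋₊ + 1) := by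
          rw [← Ioo_add_one_right_eq_Ioc]
          exact sum_Ioo_inv_sq_le ⌊Δ⌋₊ (n + 1)
      _ ≤ 2 / Δ := by
          gcongr
          exact (Nat.lt_floor_add_one Δ).le
  calc ∑ s ∈ T, (r s : ℝ) ^ 2
      ≤ ∑ s ∈ T, (min (r s : ℝ) Δ ^ 2 + ∑ τ ∈ Ioc ⌊Δ⌋₊ (r s), 2 * (τ : ℝ)) :=
        sum_le_sum fun s _ => sq_le_min_sq_add_sum_Ioc (r s) hΔ.le
    _ = ∑ s ∈ T, min (r s : ℝ) Δ ^ 2 +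
          ∑ τ ∈ Ioc ⌊Δ⌋₊ n, #{s ∈ T | τ ≤ r s} * (2 * (τ : ℝ)) := by
        rw [sum_add_distrib,
          sum_sum_Ioc_eq_sum_card_level_mul (fun τ => 2 * (τ : ℝ)) fun s hs => le_sup hs]
    _ ≤ ∑ s ∈ T, min (r s : ℝ) Δ ^ 2 + ∑ τ ∈ Ioc ⌊Δ⌋₊ n, 2 * Q * ((τ : ℝ) ^ 2)⁻¹ := by
        refine add_le_add_right (sum_le_sum fun τ hτ => ?_) _
        have hτ₁ : 1 ≤ τ := Nat.one_le_of_lt (mem_Ioc.1 hτ).1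
        rw [← div_eq_mul_inv, le_div_iff₀ (by positivity)]
        linarith [hQ τ hτ₁]
    _ ≤ ∑ s ∈ T, min (r s : ℝ) Δ ^ 2 + 4 * Q / Δ := by
        rw [← mul_sum, show 4 * Q / Δ = 2 * Q * (2 / Δ) by ring]
        gcongr

/-- Interpolation between the moment of order `a` and the weak third moment: the truncation height
is chosen so that the values above it contribute at most half of the second moment. -/
theorem sum_sq_rpow_le {a : ℝ} (ha : 0 ≤ a) (ha₂ : a ≤ 2)
    (hQ : ∀ τ : ℕ, 1 ≤ τ → (#{s ∈ T | τ ≤ r s} : ℝ) * τ ^ 3 ≤ Q) :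
    (∑ s ∈ T, (r s : ℝ) ^ 2) ^ (3 - a) ≤ 2 * (8 * Q) ^ (2 - a) * ∑ s ∈ T, (r s : ℝ) ^ a := by
  set E := ∑ s ∈ T, (r s : ℝ) ^ 2 with hE
  rcases (show 0 ≤ E by positivity).eq_or_lt with hE₀ | hE₀
  · have hQ₀ : 0 ≤ Q := le_trans (by positivity) (hQ 1 le_rfl)
    rw [← hE₀, Real.zero_rpow (by linarith)]
    positivity
  have hQ₀ : 0 < Q := by
    obtain ⟨s, hs, hrs⟩ := exists_ne_zero_of_sum_ne_zero hE₀.ne'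
    have hlevel : 0 < #{s ∈ T | 1 ≤ r s} :=
      card_pos.2 ⟨s, mem_filter.2 ⟨hs, Nat.one_le_iff_ne_zero.2 fun h => hrs (by simp [h])⟩⟩
    exact lt_of_lt_of_le (by simpa using hlevel) (hQ 1 le_rfl)
  set Δ := 8 * Q / E with hΔ
  have hhalf : E ≤ 2 * (Δ ^ (2 - a) * ∑ s ∈ T, (r s : ℝ) ^ a) := by
    have htrunc : ∑ s ∈ T, min (r s : ℝ) Δ ^ 2 ≤ Δ ^ (2 - a) * ∑ s ∈ T, (r s : ℝ) ^ a := by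
      rw [mul_sum]
      exact sum_le_sum fun s _ =>
        min_sq_le_rpow_mul_rpow (Nat.cast_nonneg _) (by positivity) ha ha₂
    have htail : 4 * Q / Δ = E / 2 := by rw [hΔ]; field_simp; norm_num
    linarith [sum_sq_le_sum_min_sq_add (Δ := Δ) (by positivity) hQ]
  calc E ^ (3 - a) = E ^ (2 - a) * E := by
        rw [← Real.rpow_add_one hE₀.ne']; ring_nf
    _ ≤ E ^ (2 - a) * (2 * (Δ ^ (2 - a) * ∑ s ∈ T, (r s : ℝ) ^ a)) := by gcongr
    _ = 2 * (E * Δ) ^ (2 - a) * ∑ s ∈ T, (r s : ℝ) ^ a := by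
        rw [Real.mul_rpow hE₀.le (by positivity)]; ring
    _ = 2 * (8 * Q) ^ (2 - a) * ∑ s ∈ T, (r s : ℝ) ^ a := by
        rw [hΔ, mul_div_cancel₀ _ hE₀.ne']

lemma sum_sq_sq_le (hQ : ∀ τ : ℕ, 1 ≤ τ → (#{s ∈ T | τ ≤ r s} : ℝ) * τ ^ 3 ≤ Q) :
    (∑ s ∈ T, (r s : ℝ) ^ 2) ^ 2 ≤ 16 * Q * ∑ s ∈ T, (r s : ℝ) := by
  calc (∑ s ∈ T, (r s : ℝ) ^ 2) ^ 2 = (∑ s ∈ T, (r s : ℝ) ^ 2) ^ (3 - 1 : ℝ) := by norm_num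
    _ ≤ 2 * (8 * Q) ^ (2 - 1 : ℝ) * ∑ s ∈ T, (r s : ℝ) ^ (1 : ℝ) :=
        sum_sq_rpow_le (by norm_num) (by norm_num) hQ
    _ = 16 * Q * ∑ s ∈ T, (r s : ℝ) := by
        simp only [show (2 - 1 : ℝ) = 1 by norm_num, Real.rpow_one]
        ring

lemma sum_sq_cube_le (hQ : ∀ τ : ℕ, 1 ≤ τ → (#{s ∈ T | τ ≤ r s} : ℝ) * τ ^ 3 ≤ Q) :
    (∑ s ∈ T, (r s : ℝ) ^ 2) ^ 3 ≤ 32 * Q * (∑ s ∈ T, (r s : ℝ) ^ (3 / 2 : ℝ)) ^ 2 := by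
  have hQ₀ : 0 ≤ Q := le_trans (by positivity) (hQ 1 le_rfl)
  calc (∑ s ∈ T, (r s : ℝ) ^ 2) ^ 3 = ((∑ s ∈ T, (r s : ℝ) ^ 2) ^ (3 - 3 / 2 : ℝ)) ^ 2 := by
        rw [← Real.rpow_mul_natCast (by positivity)]
        norm_num
    _ ≤ (2 * (8 * Q) ^ (2 - 3 / 2 : ℝ) * ∑ s ∈ T, (r s : ℝ) ^ (3 / 2 : ℝ)) ^ 2 := by
        gcongr
        exact sum_sq_rpow_le (by norm_num) (by norm_num) hQ
    _ = 32 * Q * (∑ s ∈ T, (r s : ℝ) ^ (3 / 2 : ℝ)) ^ 2 := by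
        rw [mul_pow, mul_pow, ← Real.rpow_mul_natCast (by positivity),
          show (2 - 3 / 2 : ℝ) * (2 : ℕ) = 1 by norm_num, Real.rpow_one]
        ring

end WeakCubeBound

section Energy

variable {G : Type*} [AddCommGroup G] [DecidableEq G]

lemma addEnergy_eq_sum_addConvolution_mul {X Y T : Finset G} (hT : X - X ⊆ T) :
    X.addEnergy Y = ∑ s ∈ T, X.addConvolution (-X) s * Y.addConvolution (-Y) s := by
  rw [addEnergy, card_eq_sum_card_fiberwise (f := fun x => x.1.1 - x.1.2) (t := T)]
  · refine sum_congr rfl fun s _ => ?_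
    rw [← card_sub_eq, ← card_sub_eq, ← card_product]
    refine card_nbij' (fun x => (x.1, x.2.swap)) (fun x => (x.1, x.2.swap)) ?_ ?_
      (fun _ _ => rfl) fun _ _ => rfl
    all_goals
      rintro ⟨⟨a, b⟩, c, d⟩ hx
      simp only [coe_filter, coe_product, mem_product, Set.mem_ofPred_eq, Set.mem_prod,
        Prod.swap_prod_mk] at hx ⊢
      grind
  · rintro ⟨⟨a, b⟩, c, d⟩ hx
    simp only [coe_filter, mem_product, Set.mem_ofPred_eq] at hx
    exact hT (sub_mem_sub hx.1.1.1 hx.1.1.2)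

lemma sum_addConvolution_mul_le_addEnergy (X Y T : Finset G) :
    ∑ s ∈ T, X.addConvolution (-X) s * Y.addConvolution (-Y) s ≤ X.addEnergy Y := by
  rw [addEnergy_eq_sum_addConvolution_mul (subset_union_right : X - X ⊆ T ∪ (X - X))]
  exact sum_le_sum_of_subset subset_union_left

lemma addEnergy_sq_le_addEnergy_mul_addEnergy (X Y : Finset G) :
    X.addEnergy Y ^ 2 ≤ X.addEnergy X * Y.addEnergy Y := by
  rw [addEnergy_eq_sum_addConvolution_mul (subset_union_left : X - X ⊆ (X - X) ∪ (Y - Y)),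
    addEnergy_eq_sum_addConvolution_mul (subset_union_left : X - X ⊆ (X - X) ∪ (Y - Y)),
    addEnergy_eq_sum_addConvolution_mul (subset_union_right : Y - Y ⊆ (X - X) ∪ (Y - Y))]
  simp_rw [← sq]
  exact sum_mul_sq_le_sq_mul_sq _ _ _

/-- The Katz–Koester set `X ∩ (X + s)`, whose size is the number of representations of `s` as a
difference of two elements of `X`. -/
def shiftInter (X : Finset G) (s : G) : Finset G := X ∩ (s +ᵥ X)

lemma mem_shiftInter {X : Finset G} {s x : G} : x ∈ shiftInter X s ↔ x ∈ X ∧ x - s ∈ X := by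
  rw [shiftInter, mem_inter, ← neg_vadd_mem_iff, vadd_eq_add, neg_add_eq_sub]

lemma card_shiftInter (X : Finset G) (s : G) : #(shiftInter X s) = X.addConvolution (-X) s :=
  card_inter_vadd X X s

lemma shiftInter_add_subset (X Y : Finset G) (s : G) :
    shiftInter X s + Y ⊆ shiftInter (X + Y) s := by
  rw [shiftInter, shiftInter, ← vadd_add_assoc]
  exact inter_add_subset

lemma sum_addConvolution_shiftInter_le (X T : Finset G) (u : G) :
    ∑ s ∈ T, (shiftInter X s).addConvolution (-shiftInter X s) u ≤
      X.addConvolution (-X) u ^ 2 := by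
  simp_rw [← card_sub_eq]
  rw [sq, ← card_product, ← card_sigma]
  refine card_le_card_of_injOn (fun x => (x.2, (x.2.1 - x.1, x.2.2 - x.1))) ?_ ?_
  · rintro ⟨s, a, b⟩ hx
    simp only [coe_sigma, Set.mem_sigma_iff, coe_filter, mem_product, mem_shiftInter,
      Set.mem_ofPred_eq, coe_product, Set.mem_prod] at hx ⊢
    grind
  · rintro ⟨s, a, b⟩ - ⟨s', a', b'⟩ - heq
    simp only [Prod.mk.injEq] at heq
    obtain ⟨⟨rfl, rfl⟩, hs, -⟩ := heq
    rw [sub_right_injective hs]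

lemma sum_addEnergy_shiftInter_le (X Y T : Finset G) :
    ∑ s ∈ T, (shiftInter X s).addEnergy Y ≤
      ∑ u ∈ X - X, X.addConvolution (-X) u ^ 2 * Y.addConvolution (-Y) u := by
  have hsub : ∀ s, shiftInter X s - shiftInter X s ⊆ X - X := fun s =>
    sub_subset_sub inter_subset_left inter_subset_left
  simp_rw [addEnergy_eq_sum_addConvolution_mul (hsub _)]
  rw [sum_comm]
  refine sum_le_sum fun u _ => ?_
  rw [← sum_mul]
  exact Nat.mul_le_mul_right _ (sum_addConvolution_shiftInter_le X T u)

lemma addConvolution_sq_mul_card_sq_le (X Y : Finset G) (s : G) :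
    X.addConvolution (-X) s ^ 2 * #Y ^ 2 ≤
      (X + Y).addConvolution (-(X + Y)) s * (shiftInter X s).addEnergy Y := by
  rw [← card_shiftInter, ← card_shiftInter]
  exact (le_card_add_mul_addEnergy _ _).trans
    (Nat.mul_le_mul_right _ (card_le_card (shiftInter_add_subset X Y s)))

theorem sq_card_mul_sum_addConvolution_rpow_le (X Y T : Finset G) :
    (#Y * ∑ s ∈ T, (X.addConvolution (-X) s : ℝ) ^ (3 / 2 : ℝ)) ^ 2 ≤
      X.addEnergy (X + Y) *
        ∑ u ∈ X - X, (X.addConvolution (-X) u : ℝ) ^ 2 * Y.addConvolution (-Y) u := by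
  have hpt : ∀ s, (#Y * (X.addConvolution (-X) s : ℝ) ^ (3 / 2 : ℝ)) ^ 2 ≤
      (X.addConvolution (-X) s * (X + Y).addConvolution (-(X + Y)) s : ℕ) *
        ((shiftInter X s).addEnergy Y : ℝ) := fun s => by
    calc (#Y * (X.addConvolution (-X) s : ℝ) ^ (3 / 2 : ℝ)) ^ 2
        = (X.addConvolution (-X) s * (X.addConvolution (-X) s ^ 2 * #Y ^ 2) : ℕ) := by
          rw [mul_pow, ← Real.rpow_mul_natCast (Nat.cast_nonneg _),
            show (3 / 2 : ℝ) * (2 : ℕ) = (3 : ℕ) by norm_num, Real.rpow_natCast]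
          push_cast
          ring
      _ ≤ (X.addConvolution (-X) s *
            ((X + Y).addConvolution (-(X + Y)) s * (shiftInter X s).addEnergy Y) : ℕ) := by
          exact_mod_cast Nat.mul_le_mul_left _ (addConvolution_sq_mul_card_sq_le X Y s)
      _ = (X.addConvolution (-X) s * (X + Y).addConvolution (-(X + Y)) s : ℕ) *
            ((shiftInter X s).addEnergy Y : ℝ) := by push_cast; ring
  rw [mul_sum]
  calc (∑ s ∈ T, #Y * (X.addConvolution (-X) s : ℝ) ^ (3 / 2 : ℝ)) ^ 2
      ≤ (∑ s ∈ T, ((X.addConvolution (-X) s * (X + Y).addConvolution (-(X + Y)) s : ℕ) : ℝ)) *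
          ∑ s ∈ T, ((shiftInter X s).addEnergy Y : ℝ) :=
        sum_sq_le_sum_mul_sum_of_sq_le_mul T (fun _ _ => Nat.cast_nonneg _)
          (fun _ _ => Nat.cast_nonneg _) fun s _ => hpt s
    _ ≤ X.addEnergy (X + Y) *
          ∑ u ∈ X - X, (X.addConvolution (-X) u : ℝ) ^ 2 * Y.addConvolution (-Y) u := by
        exact_mod_cast Nat.mul_le_mul (sum_addConvolution_mul_le_addEnergy X (X + Y) T)
          (sum_addEnergy_shiftInter_le X Y T)

end Energy

lemma image_fst_image_swap {α β : Type*} [DecidableEq α] [DecidableEq β] (P : Finset (α × β)) :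
    (P.image Prod.swap).image Prod.fst = P.image Prod.snd := image_image

lemma image_snd_image_swap {α β : Type*} [DecidableEq α] [DecidableEq β] (P : Finset (α × β)) :
    (P.image Prod.swap).image Prod.snd = P.image Prod.fst := image_image

namespace IsSidonChain

section Swap

variable {G H : Type*} [AddCommGroup G] [LinearOrder G] [AddCommGroup H] [LinearOrder H]
  {P : Finset (G × H)}

protected lemma swap (hP : IsSidonChain P) : IsSidonChain (P.image Prod.swap) where
  injOn_fst := by
    rw [coe_image]
    exact Set.InjOn.image_of_comp (f := Prod.swap) hP.injOn_snd
  injOn_snd := by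
    rw [coe_image]
    exact Set.InjOn.image_of_comp (f := Prod.swap) hP.injOn_fst
  monovaryOn_or_antivaryOn := by
    rw [coe_image]
    refine hP.monovaryOn_or_antivaryOn.imp (fun h => ?_) fun h => ?_
    all_goals
      rintro _ ⟨x, hx, rfl⟩ _ ⟨y, hy, rfl⟩ hxy
      exact h.symm hx hy hxy
  eq_of_sub_eq_sub := by
    simp only [forall_mem_image]
    intro x hx y hy x' hx' y' hy' hxy hsub
    rw [hP.eq_of_sub_eq_sub x hx y hy x' hx' y' hy' (fun h => hxy (congrArg _ h))
      (Prod.swap_injective hsub)]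

lemma card_image_fst (hP : IsSidonChain P) : #(P.image Prod.fst) = #P :=
  card_image_of_injOn hP.injOn_fst

lemma card_image_snd (hP : IsSidonChain P) : #(P.image Prod.snd) = #P :=
  card_image_of_injOn hP.injOn_snd

end Swap

section Moments

variable {G H : Type*} [AddCommGroup G] [LinearOrder G] [IsOrderedAddMonoid G] [AddCommGroup H]
  [LinearOrder H] [IsOrderedAddMonoid H] {P : Finset (G × H)} {C : Finset H}

lemma card_level_mul_cube_le (hP : IsSidonChain P) (hC : C.Nonempty) (B T : Finset G) (τ : ℕ)
    (hτ : 1 ≤ τ) :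
    (#{s ∈ T | τ ≤ (P.image Prod.fst).addConvolution B s} : ℝ) * τ ^ 3 ≤
      130 * #B ^ 2 * #(P.image Prod.snd + C) ^ 2 / #C := by
  rw [le_div_iff₀ (by exact_mod_cast hC.card_pos)]
  exact hP.card_mul_cube_mul_card_le B _ hC hτ fun s hs => (mem_filter.1 hs).2

lemma sum_addConvolution_neg_cube_le (hP : IsSidonChain P) (hC : C.Nonempty) (T : Finset G) :
    ∑ s ∈ T, ((P.image Prod.fst).addConvolution (-P.image Prod.fst) s : ℝ) ^ 3 ≤
      390 * #P ^ 2 * #(P.image Prod.snd + C) ^ 2 / #C * (1 + Real.log #P) := by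
  refine (sum_cube_le_of_card_level_mul_cube_le
    (fun s _ => addConvolution_le_card_left.trans_eq hP.card_image_fst)
    (hP.card_level_mul_cube_le hC _ T)).trans_eq ?_
  rw [card_neg, hP.card_image_fst]
  ring

lemma addEnergy_sq_le (hP : IsSidonChain P) (hC : C.Nonempty) (B : Finset G) :
    ((P.image Prod.fst).addEnergy B : ℝ) ^ 2 ≤
      2080 * #P * #B ^ 3 * #(P.image Prod.snd + C) ^ 2 / #C := by
  set U := P.image Prod.fst
  have hE : (U.addEnergy B : ℝ) = ∑ s ∈ U + B, (U.addConvolution B s : ℝ) ^ 2 := by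
    rw [addEnergy_eq_sum_sq']
    simp_rw [card_add_eq]
    push_cast
    rfl
  have hone : ∑ s ∈ U + B, (U.addConvolution B s : ℝ) ≤ #P * #B := by
    rw [← hP.card_image_fst]
    exact_mod_cast sum_addConvolution_le U B (U + B)
  calc (U.addEnergy B : ℝ) ^ 2
      ≤ 16 * (130 * #B ^ 2 * #(P.image Prod.snd + C) ^ 2 / #C) *
          ∑ s ∈ U + B, (U.addConvolution B s : ℝ) :=
        hE ▸ sum_sq_sq_le (hP.card_level_mul_cube_le hC B (U + B))
    _ ≤ 16 * (130 * #B ^ 2 * #(P.image Prod.snd + C) ^ 2 / #C) * (#P * #B : ℝ) := by gcongr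
    _ = 2080 * #P * #B ^ 3 * #(P.image Prod.snd + C) ^ 2 / #C := by ring

lemma addEnergy_self_pow_three_le (hP : IsSidonChain P) (hC : C.Nonempty) :
    ((P.image Prod.fst).addEnergy (P.image Prod.fst) : ℝ) ^ 3 ≤
      4160 * #P ^ 2 * #(P.image Prod.snd + C) ^ 2 / #C *
        (∑ s ∈ P.image Prod.fst - P.image Prod.fst,
          ((P.image Prod.fst).addConvolution (-P.image Prod.fst) s : ℝ) ^ (3 / 2 : ℝ)) ^ 2 := by
  set U := P.image Prod.fst
  have hE : (U.addEnergy U : ℝ) = ∑ s ∈ U - U, (U.addConvolution (-U) s : ℝ) ^ 2 := by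
    rw [addEnergy_eq_sum_addConvolution_mul (Subset.refl _)]
    push_cast
    simp_rw [← sq]
  rw [hE]
  refine (sum_sq_cube_le (hP.card_level_mul_cube_le hC (-U) (U - U))).trans_eq ?_
  rw [card_neg, hP.card_image_fst]
  ring

end Moments

section Energy

variable {G : Type*} [AddCommGroup G] [LinearOrder G] [IsOrderedAddMonoid G] {P : Finset (G × G)}

lemma sum_addConvolution_neg_cube_le_self (hP : IsSidonChain P) (hne : P.Nonempty) (T : Finset G) :
    ∑ s ∈ T, ((P.image Prod.fst).addConvolution (-P.image Prod.fst) s : ℝ) ^ 3 ≤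
      390 * #P * #(P.image Prod.fst + P.image Prod.snd) ^ 2 * (1 + Real.log #P) := by
  refine (hP.sum_addConvolution_neg_cube_le (hne.image Prod.fst) T).trans_eq ?_
  have : (#P : ℝ) ≠ 0 := by exact_mod_cast hne.card_ne_zero
  rw [hP.card_image_fst, add_comm (P.image Prod.snd)]
  field_simp

lemma sum_addConvolution_neg_sq_mul_le (hP : IsSidonChain P) (hne : P.Nonempty) (T : Finset G) :
    ∑ s ∈ T, ((P.image Prod.fst).addConvolution (-P.image Prod.fst) s : ℝ) ^ 2 *
        (P.image Prod.snd).addConvolution (-P.image Prod.snd) s ≤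
      390 * #P * #(P.image Prod.fst + P.image Prod.snd) ^ 2 * (1 + Real.log #P) := by
  have hfst := hP.sum_addConvolution_neg_cube_le_self hne T
  have hsnd := hP.swap.sum_addConvolution_neg_cube_le_self (hne.image _) T
  rw [image_fst_image_swap, image_snd_image_swap, add_comm (P.image Prod.snd),
    card_image_of_injective P Prod.swap_injective] at hsnd
  have hamgm : ∀ x y : ℝ, 0 ≤ x → 0 ≤ y → x ^ 2 * y ≤ 2 / 3 * x ^ 3 + 1 / 3 * y ^ 3 :=
    fun x y hx hy => by
      have hnonneg : 0 ≤ (2 * x + y) * (x - y) ^ 2 := by positivity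
      linarith
  refine (sum_le_sum fun s _ => hamgm _ _ (Nat.cast_nonneg _) (Nat.cast_nonneg _)).trans ?_
  rw [sum_add_distrib, ← mul_sum, ← mul_sum]
  linarith

lemma addEnergy_self_pow_three_le_mul_addEnergy (hP : IsSidonChain P) (hne : P.Nonempty) :
    ((P.image Prod.fst).addEnergy (P.image Prod.fst) : ℝ) ^ 3 ≤
      1622400 * #(P.image Prod.fst + P.image Prod.snd) ^ 4 * (1 + Real.log #P) *
        (P.image Prod.fst).addEnergy (P.image Prod.fst + P.image Prod.snd) := by
  have : (0 : ℝ) < #P := by exact_mod_cast hne.card_pos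
  have hmixed := hP.sum_addConvolution_neg_sq_mul_le hne (P.image Prod.fst - P.image Prod.fst)
  have hmoment := sq_card_mul_sum_addConvolution_rpow_le (P.image Prod.fst) (P.image Prod.snd)
    (P.image Prod.fst - P.image Prod.fst)
  have hcube := hP.addEnergy_self_pow_three_le (hne.image Prod.fst)
  rw [hP.card_image_fst, add_comm (P.image Prod.snd)] at hcube
  rw [hP.card_image_snd] at hmoment
  set U := P.image Prod.fst
  set E := U.addEnergy (U + P.image Prod.snd)
  set M : ℝ := (#(U + P.image Prod.snd) : ℝ)
  set L := 1 + Real.log #P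
  set S := ∑ s ∈ U - U, (U.addConvolution (-U) s : ℝ) ^ (3 / 2 : ℝ)
  calc (U.addEnergy U : ℝ) ^ 3 ≤ 4160 * #P ^ 2 * M ^ 2 / #P * S ^ 2 := hcube
    _ = 4160 * M ^ 2 / #P * (#P * S) ^ 2 := by field_simp
    _ ≤ 4160 * M ^ 2 / #P * (E * (390 * #P * M ^ 2 * L)) := by
        gcongr
        exact hmoment.trans (by gcongr)
    _ = 1622400 * M ^ 4 * L * E := by field_simp; ring

lemma addEnergy_self_pow_six_le (hP : IsSidonChain P) (hne : P.Nonempty) :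
    ((P.image Prod.fst).addEnergy (P.image Prod.fst) : ℝ) ^ 6 ≤
      1622400 ^ 2 * 2080 * #(P.image Prod.fst + P.image Prod.snd) ^ 13 *
        (1 + Real.log #P) ^ 2 := by
  have hcube := hP.addEnergy_self_pow_three_le_mul_addEnergy hne
  have hsum := hP.addEnergy_sq_le (hne.image Prod.fst)
    (P.image Prod.fst + P.image Prod.snd)
  rw [hP.card_image_fst, add_comm (P.image Prod.snd)] at hsum
  set U := P.image Prod.fst
  set E := U.addEnergy (U + P.image Prod.snd)
  set M : ℝ := (#(U + P.image Prod.snd) : ℝ)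
  set L := 1 + Real.log #P
  have hE : (E : ℝ) ^ 2 ≤ 2080 * M ^ 5 := by
    have : (#P : ℝ) ≠ 0 := by exact_mod_cast hne.card_ne_zero
    exact hsum.trans_eq (by field_simp)
  calc (U.addEnergy U : ℝ) ^ 6 = ((U.addEnergy U : ℝ) ^ 3) ^ 2 := by ring
    _ ≤ (1622400 * M ^ 4 * L * E) ^ 2 := by gcongr
    _ = 1622400 ^ 2 * M ^ 8 * L ^ 2 * (E : ℝ) ^ 2 := by ring
    _ ≤ 1622400 ^ 2 * M ^ 8 * L ^ 2 * (2080 * M ^ 5) := by gcongr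
    _ = 1622400 ^ 2 * 2080 * M ^ 13 * L ^ 2 := by ring

theorem card_pow_le_mul_card_add_pow (hP : IsSidonChain P) :
    (#P : ℝ) ^ 24 ≤ 1622400 ^ 2 * 2080 * #(P.image Prod.fst + P.image Prod.snd) ^ 19 *
      (1 + Real.log #P) ^ 2 := by
  rcases P.eq_empty_or_nonempty with rfl | hne
  · simp
  have hfst := hP.addEnergy_self_pow_six_le hne
  have hsnd := hP.swap.addEnergy_self_pow_six_le (hne.image _)
  rw [image_fst_image_swap, image_snd_image_swap, add_comm (P.image Prod.snd),
    card_image_of_injective P Prod.swap_injective] at hsnd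
  have hCS := addEnergy_sq_le_addEnergy_mul_addEnergy (P.image Prod.fst) (P.image Prod.snd)
  have hE := le_card_add_mul_addEnergy (P.image Prod.fst) (P.image Prod.snd)
  rw [hP.card_image_fst, hP.card_image_snd] at hE
  set U := P.image Prod.fst
  set V := P.image Prod.snd
  set R := 1622400 ^ 2 * 2080 * (#(U + V) : ℝ) ^ 13 * (1 + Real.log #P) ^ 2 with hR
  have hprod : (U.addEnergy U * V.addEnergy V : ℝ) ^ 3 ≤ R := by
    calc (U.addEnergy U * V.addEnergy V : ℝ) ^ 3
        = (U.addEnergy U : ℝ) ^ 3 * (V.addEnergy V : ℝ) ^ 3 := mul_pow _ _ _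
      _ ≤ R := by nlinarith [sq_nonneg ((U.addEnergy U : ℝ) ^ 3 - (V.addEnergy V : ℝ) ^ 3)]
  calc (#P : ℝ) ^ 24 = ((#P : ℝ) ^ 2 * #P ^ 2) ^ 6 := by ring
    _ ≤ (#(U + V) * U.addEnergy V : ℝ) ^ 6 :=
        pow_le_pow_left₀ (by positivity) (by exact_mod_cast hE) 6
    _ = #(U + V) ^ 6 * ((U.addEnergy V : ℝ) ^ 2) ^ 3 := by ring
    _ ≤ #(U + V) ^ 6 * (U.addEnergy U * V.addEnergy V : ℝ) ^ 3 := by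
        gcongr
        exact_mod_cast hCS
    _ ≤ #(U + V) ^ 6 * R := by gcongr
    _ = 1622400 ^ 2 * 2080 * #(U + V) ^ 19 * (1 + Real.log #P) ^ 2 := by rw [hR]; ring

end Energy

end IsSidonChain

section Convex

variable {𝕜 : Type*} [Field 𝕜] [LinearOrder 𝕜] [IsStrictOrderedRing 𝕜] {s : Set 𝕜} {f : 𝕜 → 𝕜}

lemma sub_lt_sub_of_strictConvexOn_s15 (hf : StrictConvexOn 𝕜 s f) {x x' y y' : 𝕜} (hx : x ∈ s)
    (hy : y ∈ s) (hx' : x' ∈ s) (hy' : y' ∈ s) (hxy : x < y) (hxx' : x < x')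
    (hsub : y - x = y' - x') : f y - f x < f y' - f x' := by
  have hxy' : x < y' := by linarith
  have hleft := hf.secant_strict_mono hx hy hy' hxy.ne' hxy'.ne' (by linarith)
  have hright := hf.secant_strict_mono hy' hx hx' hxy'.ne (by linarith) hxx'
  have hpos : 0 < y - x := sub_pos.2 hxy
  rw [← neg_sub (f y') (f x), ← neg_sub y' x, neg_div_neg_eq, ← neg_sub (f y') (f x'),
    ← neg_sub y' x', neg_div_neg_eq, ← hsub] at hright
  exact (div_lt_div_iff_of_pos_right hpos).1 (hleft.trans hright)

lemma eq_of_sub_eq_sub_of_strictConvexOn_s15 (hf : StrictConvexOn 𝕜 s f) {x x' y y' : 𝕜} (hx : x ∈ s)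
    (hy : y ∈ s) (hx' : x' ∈ s) (hy' : y' ∈ s) (hxy : x ≠ y) (hsub : x - y = x' - y')
    (hfsub : f x - f y = f x' - f y') : x = x' := by
  wlog hlt : x < x' generalizing x x' y y'
  · rcases (not_lt.1 hlt).eq_or_lt with h | h
    · exact h.symm
    · exact (this hx' hy' hx hy (by grind) hsub.symm hfsub.symm h).symm
  rcases hxy.lt_or_gt with h | h
  · linarith [sub_lt_sub_of_strictConvexOn_s15 hf hx hy hx' hy' h hlt (by linarith)]
  · linarith [sub_lt_sub_of_strictConvexOn_s15 hf hy hx hy' hx' h (by linarith) hsub]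

lemma isSidonChain_image_graph (hf : StrictConvexOn 𝕜 s f) {A : Finset 𝕜} (hA : (A : Set 𝕜) ⊆ s)
    (hmono : StrictMonoOn f A ∨ StrictAntiOn f A) :
    IsSidonChain (A.image fun x => (x, f x)) where
  injOn_fst := by
    rw [coe_image]
    exact Set.InjOn.image_of_comp (Set.injOn_id _)
  injOn_snd := by
    rw [coe_image]
    exact Set.InjOn.image_of_comp (hmono.elim StrictMonoOn.injOn StrictAntiOn.injOn)
  monovaryOn_or_antivaryOn := by
    rw [coe_image]
    refine hmono.imp (fun h => ?_) fun h => ?_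
    all_goals
      rintro _ ⟨x, hx, rfl⟩ _ ⟨y, hy, rfl⟩ hxy
      exact (h hx hy hxy).le
  eq_of_sub_eq_sub := by
    simp only [forall_mem_image, Prod.mk_sub_mk, Prod.mk.injEq]
    intro x hx y hy x' hx' y' hy' hxy ⟨hsub, hfsub⟩
    obtain rfl := eq_of_sub_eq_sub_of_strictConvexOn_s15 hf (hA hx) (hA hy) (hA hx') (hA hy')
      (fun h => hxy (by rw [h])) hsub hfsub
    exact ⟨rfl, rfl⟩

lemma exists_subset_strictMonoOn_or_strictAntiOn (hf : StrictConvexOn 𝕜 s f) {A : Finset 𝕜}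
    (hA : (A : Set 𝕜) ⊆ s) :
    ∃ B ⊆ A, #A ≤ 2 * #B ∧ (StrictMonoOn f B ∨ StrictAntiOn f B) := by
  set p : 𝕜 → Prop := fun x => ∃ y ∈ A, x < y ∧ f y ≤ f x
  have hanti : StrictAntiOn f ({x ∈ A | p x} : Finset 𝕜) := by
    intro x hx z hz hxz
    obtain ⟨-, y, hy, hzy, hfy⟩ := mem_filter.1 hz
    have hxA := (mem_filter.1 hx).1
    by_contra! hle
    have hz : z ∈ openSegment 𝕜 x y := by
      rw [openSegment_eq_Ioo (hxz.trans hzy)]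
      exact ⟨hxz, hzy⟩
    have hmax := hf.lt_on_openSegment (hA hxA) (hA hy) (hxz.trans hzy).ne hz
    rcases lt_max_iff.1 hmax with h | h <;> linarith
  have hmono : StrictMonoOn f ({x ∈ A | ¬p x} : Finset 𝕜) := by
    intro x hx z hz hxz
    by_contra! hle
    exact (mem_filter.1 hx).2 ⟨z, (mem_filter.1 hz).1, hxz, hle⟩
  have hcard := card_filter_add_card_filter_not (s := A) p
  rcases le_total #{x ∈ A | p x} #{x ∈ A | ¬p x} with h | h
  · exact ⟨_, filter_subset _ A, by lia, Or.inl hmono⟩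
  · exact ⟨_, filter_subset _ A, by lia, Or.inr hanti⟩

lemma card_pow_le_card_add_image_pow_mul_log_sq (hf : StrictConvexOn 𝕜 s f) {A : Finset 𝕜}
    (hA : (A : Set 𝕜) ⊆ s) (hcard : 2 ≤ #A) :
    (#A : ℝ) ^ 24 ≤ (20 * #(A + A.image f)) ^ 19 * Real.log #A ^ 2 := by
  obtain ⟨B, hBA, hAB, hB⟩ := exists_subset_strictMonoOn_or_strictAntiOn hf hA
  have hpow :=
    (isSidonChain_image_graph hf ((coe_subset.2 hBA).trans hA) hB).card_pow_le_mul_card_add_pow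
  rw [card_image_of_injective B fun _ _ h => (Prod.mk.inj h).1, image_image, image_image] at hpow
  have hfst : B.image (Prod.fst ∘ fun x => (x, f x)) = B := image_id
  have hsnd : B.image (Prod.snd ∘ fun x => (x, f x)) = B.image f := rfl
  rw [hfst, hsnd] at hpow
  have hB₀ : (1 : ℝ) ≤ #B := by exact_mod_cast (by lia : 1 ≤ #B)
  have hlog : 1 + Real.log #B ≤ 3 * Real.log #A := by
    have hBA' : Real.log #B ≤ Real.log #A := by gcongr
    have htwo : Real.log 2 ≤ Real.log #A := by gcongr; exact_mod_cast hcard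
    linarith [Real.log_two_gt_d9]
  have : 0 ≤ 1 + Real.log #B := by linarith [Real.log_nonneg hB₀]
  calc (#A : ℝ) ^ 24 ≤ (2 * #B) ^ 24 := by gcongr; exact_mod_cast hAB
    _ = 2 ^ 24 * (#B : ℝ) ^ 24 := by ring
    _ ≤ 2 ^ 24 * (1622400 ^ 2 * 2080 * #(B + B.image f) ^ 19 * (1 + Real.log #B) ^ 2) := by
        gcongr
    _ ≤ 2 ^ 24 * (1622400 ^ 2 * 2080 * #(A + A.image f) ^ 19 * (3 * Real.log #A) ^ 2) := by
        gcongr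
    _ = 2 ^ 24 * 1622400 ^ 2 * 2080 * 9 * (#(A + A.image f) ^ 19 * Real.log #A ^ 2) := by ring
    _ ≤ 20 ^ 19 * (#(A + A.image f) ^ 19 * Real.log #A ^ 2) := by gcongr; norm_num
    _ = (20 * #(A + A.image f)) ^ 19 * Real.log #A ^ 2 := by ring

theorem stmt15_general (hf : StrictConvexOn 𝕜 s f) {A : Finset 𝕜} (hA : (A : Set 𝕜) ⊆ s)
    (hcard : 2 ≤ #A) :
    1 / 20 * (#A : ℝ) ^ ((24 : ℝ) / 19) / Real.log #A ^ ((2 : ℝ) / 19) ≤ #(A + A.image f) := by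
  have hlog : 0 < Real.log #A := Real.log_pos (by exact_mod_cast hcard)
  have hroot : (#A : ℝ) ^ ((24 : ℝ) / 19) ≤
      20 * #(A + A.image f) * Real.log #A ^ ((2 : ℝ) / 19) := by
    refine le_of_pow_le_pow_left₀ (n := 19) (by norm_num) (by positivity) ?_
    rw [mul_pow, ← Real.rpow_mul_natCast (Nat.cast_nonneg _), ← Real.rpow_mul_natCast hlog.le,
      show (24 : ℝ) / 19 * (19 : ℕ) = (24 : ℕ) by norm_num,
      show (2 : ℝ) / 19 * (19 : ℕ) = (2 : ℕ) by norm_num, Real.rpow_natCast, Real.rpow_natCast]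
    exact card_pow_le_card_add_image_pow_mul_log_sq hf hA hcard
  rw [div_le_iff₀ (by positivity)]
  linarith

end Convex

theorem stmt15 : ∃ K : ℝ, 0 < K ∧
    ∀ f : ℝ → ℝ, Continuous f → StrictConvexOn ℝ Set.univ f →
    ∀ A : Finset ℝ, 2 ≤ A.card →
    ((A + A.image f).card : ℝ) ≥
      K * (A.card : ℝ) ^ ((24 : ℝ) / 19) / (Real.log A.card) ^ ((2 : ℝ) / 19) :=
  ⟨1 / 20, by norm_num, fun _ _ hf _ hA => stmt15_general hf (Set.subset_univ _) hA⟩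
end
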